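/- arXiv:2109.09877 — 3 statements merged into one kernel-verified Lean document; each statement's English description precedes it below -/
import Mathlib

section
/- Let p > 3 be a prime. Then ∑_{k=1}^{(p-1)/2} H_{2k}/k ≡ q_p(2)^2 - p·q_p(2)^3 + (7/24)·p·B_{p-3} modulo p^2 (as rational numbers). -/
/-- Two rationals `a` and `b` are congruent modulo `p^r`:
the `p`-adic valuation of `a - b` is at least `r`, i.e. `a - b = c * p^r`
with the denominator of `c` not divisible by `p`. -/
def ratCongr (p r : ℕ) (a b : ℚ) : Prop :=
  ∃ c : ℚ, a - b = c * (p : ℚ) ^ r ∧ ¬ (p ∣ c.den)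

/-- The Fermat quotient `q_p(2) = (2^(p-1) - 1)/p` (an integer for odd primes),
viewed as a rational number. -/
def fermatQ (p : ℕ) : ℚ := ((2 : ℚ) ^ (p - 1) - 1) / p

open Finset

/-- The truncated power sum `∑_{k=1}^n (v k)^r`; for `v k = 1 / k` a generalized harmonic number. -/
def powSum {A : Type*} [CommRing A] (v : ℕ → A) (r n : ℕ) : A := ∑ k ∈ Icc 1 n, v k ^ r

section PowSum

variable {A : Type*} [CommRing A] (v : ℕ → A)

@[simp]
lemma powSum_zero (r : ℕ) : powSum v r 0 = 0 := by simp [powSum]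

lemma powSum_succ (r n : ℕ) : powSum v r (n + 1) = powSum v r n + v (n + 1) ^ r := by
  simp [powSum, sum_Icc_succ_top]

lemma two_mul_sum_powSum_mul (n : ℕ) :
    2 * ∑ k ∈ Icc 1 n, powSum v 1 k * v k = powSum v 1 n ^ 2 + powSum v 2 n := by
  induction n with
  | zero => simp
  | succ n ih =>
    rw [sum_Icc_succ_top (by omega), powSum_succ, powSum_succ]
    linear_combination ih

end PowSum

lemma sum_Icc_reflect {A : Type*} [AddCommMonoid A] (f : ℕ → A) (n : ℕ) :
    ∑ k ∈ Icc 1 n, f (n + 1 - k) = ∑ k ∈ Icc 1 n, f k := by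
  refine sum_nbij' (fun k => n + 1 - k) (fun k => n + 1 - k) ?_ ?_ ?_ ?_ ?_ <;>
    intro k hk <;> simp only [mem_Icc] at * <;> omega

lemma sum_Icc_fold {A : Type*} [AddCommMonoid A] (f : ℕ → A) (m : ℕ) :
    ∑ k ∈ Icc 1 (2 * m), f k = ∑ k ∈ Icc 1 m, (f k + f (2 * m + 1 - k)) := by
  rw [sum_add_distrib]
  have h : ∑ k ∈ Icc 1 m, f (2 * m + 1 - k) = ∑ k ∈ Icc (m + 1) (2 * m), f k := by
    refine sum_nbij' (fun k => 2 * m + 1 - k) (fun k => 2 * m + 1 - k) ?_ ?_ ?_ ?_ ?_ <;>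
      intro k hk <;> simp only [mem_Icc] at * <;> omega
  have h' : Icc 1 (2 * m) = Icc 1 m ∪ Icc (m + 1) (2 * m) := by
    ext k; simp only [mem_Icc, mem_union]; omega
  rw [h, h', sum_union]
  rw [disjoint_left]
  intro k; simp only [mem_Icc]; omega

lemma sum_Icc_even_odd {A : Type*} [AddCommMonoid A] (f : ℕ → A) (m : ℕ) :
    ∑ k ∈ Icc 1 (2 * m), f k = ∑ k ∈ Icc 1 m, (f (2 * k) + f (2 * m + 1 - 2 * k)) := by
  have h : ∑ k ∈ Icc 1 (2 * m), f k = ∑ k ∈ Icc 1 m, (f (2 * k) + f (2 * k - 1)) := by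
    induction m with
    | zero => simp
    | succ n ih =>
      rw [sum_Icc_succ_top (by omega), ← ih, show 2 * (n + 1) = 2 * n + 1 + 1 by ring,
        sum_Icc_succ_top (by omega), sum_Icc_succ_top (by omega), add_assoc,
        add_comm (f (2 * n + 1)), Nat.add_sub_cancel]
  rw [h, sum_add_distrib, sum_add_distrib, ← sum_Icc_reflect (fun k => f (2 * k - 1))]
  congr 1
  refine sum_congr rfl fun k hk => ?_
  rw [mem_Icc] at hk
  congr 1; omega

/-- `v k` is an inverse of `k` for `0 < k < p`, in a ring where `p ^ 2 = 0` and `p = 2 * m + 1`. -/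
structure IsInvSeq {A : Type*} [CommRing A] (p m : ℕ) (v : ℕ → A) : Prop where
  eq_two_mul : p = 2 * m + 1
  three_lt : 3 < p
  sq_eq_zero : (p : A) ^ 2 = 0
  mul_inv : ∀ k, 0 < k → k < p → (k : A) * v k = 1

namespace IsInvSeq

variable {A : Type*} [CommRing A] {p m : ℕ} {v : ℕ → A}

lemma eq_inv (H : IsInvSeq p m v) {k : ℕ} {x : A} (h0 : 0 < k) (hk : k < p)
    (h : (k : A) * x = 1) : v k = x := by
  linear_combination x * H.mul_inv k h0 hk - v k * h

lemma two_mul_inv (H : IsInvSeq p m v) : 2 * v 2 = 1 := by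
  simpa using H.mul_inv 2 two_pos (by have := H.three_lt; omega)

lemma three_mul_inv (H : IsInvSeq p m v) : 3 * v 3 = 1 := by
  simpa using H.mul_inv 3 three_pos H.three_lt

lemma inv_two_mul (H : IsInvSeq p m v) {k : ℕ} (h0 : 0 < k) (hk : 2 * k < p) :
    v (2 * k) = v 2 * v k := by
  refine H.eq_inv (by omega) hk ?_
  push_cast
  linear_combination k * v k * H.two_mul_inv + H.mul_inv k h0 (by omega)

lemma inv_sub (H : IsInvSeq p m v) {k : ℕ} (h0 : 0 < k) (hk : k < p) :
    v (p - k) = -v k - p * v k ^ 2 := by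
  refine H.eq_inv (by omega) (by omega) ?_
  rw [Nat.cast_sub hk.le]
  linear_combination (1 + p * v k) * H.mul_inv k h0 hk - v k ^ 2 * H.sq_eq_zero

lemma mul_inv_sub (H : IsInvSeq p m v) {k : ℕ} (h0 : 0 < k) (hk : k < p) :
    p * v (p - k) = -(p * v k) := by
  rw [H.inv_sub h0 hk]
  linear_combination -v k ^ 2 * H.sq_eq_zero

/-- The partial fraction decomposition `1 / (k (n - k)) = (1 / k + 1 / (n - k)) / n`. -/
lemma inv_mul_inv_sub (H : IsInvSeq p m v) {k n : ℕ} (h0 : 0 < k) (hk : k < n) (hn : n < p) :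
    v k * v (n - k) = v n * (v k + v (n - k)) := by
  have h1 := H.mul_inv k h0 (by omega)
  have h2 := H.mul_inv (n - k) (by omega) (by omega)
  have h3 := H.mul_inv n (by omega) hn
  rw [Nat.cast_sub hk.le] at h2
  linear_combination (-v k * v (n - k)) * h3 + v n * v (n - k) * h1 + v n * v k * h2

lemma mul_powSum_pred (H : IsInvSeq p m v) : p * powSum v 1 (p - 1) = 0 := by
  have h : p * powSum v 1 (p - 1) = 0 * powSum v 1 m := by
    rw [powSum, powSum, show p - 1 = 2 * m by have := H.eq_two_mul; omega, sum_Icc_fold,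
      mul_sum, mul_sum]
    refine sum_congr rfl fun k hk => ?_
    rw [mem_Icc] at hk
    have := H.mul_inv_sub (k := k) (by omega) (by have := H.eq_two_mul; omega)
    rw [H.eq_two_mul] at *
    linear_combination this
  rw [h, zero_mul]

lemma mul_powSum_sub (H : IsInvSeq p m v) {k : ℕ} (hk : k < p) :
    p * powSum v 1 (p - (k + 1)) = p * powSum v 1 k := by
  induction k with
  | zero => simpa using H.mul_powSum_pred
  | succ k ih =>
    have h1 := ih (by omega)
    have h2 := H.mul_inv_sub (k := k + 1) (by omega) (by omega)
    rw [show p - (k + 1) = p - (k + 1 + 1) + 1 by omega] at h1 h2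
    rw [powSum_succ] at h1 ⊢
    linear_combination h1 - h2

/-- Convolution of `1 / k` with itself. -/
lemma sum_powSum_sub_mul (H : IsInvSeq p m v) {n : ℕ} (hn : n < p) :
    ∑ k ∈ Icc 1 n, powSum v 1 (n - k) * v k = powSum v 1 n ^ 2 - powSum v 2 n := by
  induction n with
  | zero => simp
  | succ n ih =>
    have h : ∑ k ∈ Icc 1 n, powSum v 1 (n + 1 - k) * v k
        = ∑ k ∈ Icc 1 n, (powSum v 1 (n - k) * v k + v (n + 1) * (v k + v (n + 1 - k))) := by
      refine sum_congr rfl fun k hk => ?_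
      rw [mem_Icc] at hk
      have h := H.inv_mul_inv_sub (k := k) (by omega) (by omega) hn
      rw [show n + 1 - k = n - k + 1 by omega] at *
      rw [powSum_succ]
      linear_combination h
    have h1 : ∑ k ∈ Icc 1 n, v k = powSum v 1 n := by simp [powSum]
    rw [sum_Icc_succ_top (by omega), h, sum_add_distrib, ih (by omega), ← mul_sum,
      sum_add_distrib, sum_Icc_reflect v n, h1, powSum_succ, powSum_succ]
    simp
    ring

/-- Convolution of `1 / k ^ 2` with the harmonic numbers. -/
lemma sum_powSum_sub_mul_sq (H : IsInvSeq p m v) {n : ℕ} (hn : n < p) :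
    ∑ k ∈ Icc 1 n, powSum v 1 (n - k) * v k ^ 2 = powSum v 1 n * powSum v 2 n
      + ∑ k ∈ Icc 1 n, powSum v 1 k * v k ^ 2 - 2 * powSum v 3 n := by
  induction n with
  | zero => simp
  | succ n ih =>
    have h : ∑ k ∈ Icc 1 n, powSum v 1 (n + 1 - k) * v k ^ 2
        = ∑ k ∈ Icc 1 n, (powSum v 1 (n - k) * v k ^ 2 + (v (n + 1) * v k ^ 2 +
            v (n + 1) ^ 2 * (v k + v (n + 1 - k)))) := by
      refine sum_congr rfl fun k hk => ?_
      rw [mem_Icc] at hk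
      have h := H.inv_mul_inv_sub (k := k) (by omega) (by omega) hn
      rw [show n + 1 - k = n - k + 1 by omega] at *
      rw [powSum_succ]
      linear_combination (v k + v (n + 1)) * h
    have h1 : ∑ k ∈ Icc 1 n, v k = powSum v 1 n := by simp [powSum]
    have h2 : ∑ k ∈ Icc 1 n, v k ^ 2 = powSum v 2 n := rfl
    rw [sum_Icc_succ_top (by omega), h, sum_add_distrib, ih (by omega), sum_add_distrib, ← mul_sum,
      ← mul_sum, sum_add_distrib, sum_Icc_reflect v n, h1, h2, powSum_succ, powSum_succ,
      powSum_succ, sum_Icc_succ_top (by omega), powSum_succ]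
    simp
    ring

/-- Convolution of `1 / k` with the harmonic numbers of order two. -/
lemma sum_powSum_two_sub_mul (H : IsInvSeq p m v) {n : ℕ} (hn : n < p) :
    ∑ k ∈ Icc 1 n, powSum v 2 (n - k) * v k = powSum v 1 n * powSum v 2 n
      + ∑ k ∈ Icc 1 n, powSum v 1 k * v k ^ 2 - 2 * powSum v 3 n := by
  induction n with
  | zero => simp
  | succ n ih =>
    have h : ∑ k ∈ Icc 1 n, powSum v 2 (n + 1 - k) * v k
        = ∑ k ∈ Icc 1 n, (powSum v 2 (n - k) * v k + (v (n + 1) * v (n + 1 - k) ^ 2 +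
            v (n + 1) ^ 2 * (v k + v (n + 1 - k)))) := by
      refine sum_congr rfl fun k hk => ?_
      rw [mem_Icc] at hk
      have h := H.inv_mul_inv_sub (k := k) (by omega) (by omega) hn
      rw [show n + 1 - k = n - k + 1 by omega] at *
      rw [powSum_succ]
      linear_combination (v (n - k + 1) + v (n + 1)) * h
    have h1 : ∑ k ∈ Icc 1 n, v k = powSum v 1 n := by simp [powSum]
    have h2 : ∑ k ∈ Icc 1 n, v k ^ 2 = powSum v 2 n := rfl
    rw [sum_Icc_succ_top (by omega), h, sum_add_distrib, ih (by omega), sum_add_distrib, ← mul_sum,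
      ← mul_sum, sum_add_distrib, sum_Icc_reflect (fun k => v k ^ 2) n, sum_Icc_reflect v n, h1, h2,
      powSum_succ, powSum_succ, powSum_succ, sum_Icc_succ_top (by omega), powSum_succ]
    simp
    ring

/-- The sum of the odd-index terms of `∑ 1 / k`, up to `2 * k`. -/
lemma powSum_two_mul_sub (H : IsInvSeq p m v) {k : ℕ} (hk : k ≤ m) :
    powSum v 1 (2 * k) - v 2 * powSum v 1 k = -v 2 * (powSum v 1 m - powSum v 1 (m - k))
      - p * v 2 ^ 2 * (powSum v 2 m - powSum v 2 (m - k)) := by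
  induction k with
  | zero => simp
  | succ k ih =>
    have hp := H.eq_two_mul
    have h1 := ih (by omega)
    have h2 := H.inv_two_mul (k := k + 1) (by omega) (by omega)
    have h3 := H.inv_sub (k := 2 * (m - (k + 1) + 1)) (by omega) (by omega)
    rw [H.inv_two_mul (k := m - (k + 1) + 1) (by omega) (by omega),
      show p - 2 * (m - (k + 1) + 1) = 2 * k + 1 by omega] at h3
    rw [show m - k = m - (k + 1) + 1 by omega, powSum_succ, powSum_succ] at h1
    rw [show 2 * (k + 1) = 2 * k + 1 + 1 by ring] at *
    rw [powSum_succ, powSum_succ, powSum_succ]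
    linear_combination h1 + h2 + h3

/-- The half-range sum of `1 / k ^ 2` in terms of that of `1 / k ^ 3`. -/
lemma six_mul_powSum_two (H : IsInvSeq p m v) :
    6 * powSum v 2 m = -7 * (p * powSum v 3 m) := by
  have hp := H.eq_two_mul
  have h1 := (sum_Icc_fold (fun k => v k ^ 2) m).symm.trans (sum_Icc_even_odd _ m)
  have h2 : ∑ k ∈ Icc 1 m, (v k ^ 2 + v (2 * m + 1 - k) ^ 2)
      = 2 * powSum v 2 m + 2 * p * powSum v 3 m := by
    rw [powSum, powSum, mul_sum, mul_sum, ← sum_add_distrib]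
    refine sum_congr rfl fun k hk => ?_
    rw [mem_Icc] at hk
    rw [← hp, H.inv_sub (by omega) (by omega)]
    linear_combination v k ^ 4 * H.sq_eq_zero
  have h3 : ∑ k ∈ Icc 1 m, (v (2 * k) ^ 2 + v (2 * m + 1 - 2 * k) ^ 2)
      = 2 * v 2 ^ 2 * powSum v 2 m + 2 * p * v 2 ^ 3 * powSum v 3 m := by
    rw [powSum, powSum, mul_sum, mul_sum, ← sum_add_distrib]
    refine sum_congr rfl fun k hk => ?_
    rw [mem_Icc] at hk
    rw [← hp, H.inv_sub (by omega) (by omega), H.inv_two_mul (by omega) (by omega)]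
    linear_combination v 2 ^ 4 * v k ^ 4 * H.sq_eq_zero
  simp only [h2, h3] at h1
  have h4 := H.two_mul_inv
  have h5 : 4 * v 2 ^ 2 = 1 := by linear_combination (2 * v 2 + 1) * h4
  linear_combination 4 * h1 + 2 * powSum v 2 m * h5
    + p * powSum v 3 m * (2 * v 2 * h5 + h4)

lemma mul_powSum_two (H : IsInvSeq p m v) : p * powSum v 2 m = 0 := by
  linear_combination v 2 * v 3 * (p * H.six_mul_powSum_two - 7 * powSum v 3 m * H.sq_eq_zero)
    - p * powSum v 2 m * (3 * v 3 * H.two_mul_inv + H.three_mul_inv)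

end IsInvSeq

lemma exists_pow_pred_eq {p k : ℕ} (hp : p.Prime) (h0 : 0 < k) (hk : k < p) :
    ∃ c, k ^ (p - 1) = 1 + p * c := by
  have h1 : k ^ (p - 1) ≡ 1 [MOD p] := by
    have := Nat.ModEq.pow_totient (Nat.coprime_of_lt_prime h0.ne' hk hp).symm
    rwa [Nat.totient_prime hp] at this
  have h2 := Nat.one_le_pow (p - 1) _ h0
  obtain ⟨c, hc⟩ := (Nat.modEq_iff_dvd' h2).1 h1.symm
  exact ⟨c, by omega⟩

namespace IsInvSeq

variable {A : Type*} [CommRing A] {p m : ℕ} {v : ℕ → A}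

lemma mul_sum_odd_mul_sq (H : IsInvSeq p m v) :
    2 * (p * ∑ k ∈ Icc 1 m, (powSum v 1 (2 * k) - v 2 * powSum v 1 k) * v k ^ 2)
      = p * ∑ k ∈ Icc 1 m, powSum v 1 k * v k ^ 2 - 2 * (p * powSum v 3 m) := by
  have h : 2 * (p * ∑ k ∈ Icc 1 m, (powSum v 1 (2 * k) - v 2 * powSum v 1 k) * v k ^ 2)
      = -(p * powSum v 1 m) * ∑ k ∈ Icc 1 m, v k ^ 2
        + p * ∑ k ∈ Icc 1 m, powSum v 1 (m - k) * v k ^ 2 := by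
    simp only [mul_sum]
    rw [← sum_add_distrib]
    refine sum_congr rfl fun k hk => ?_
    rw [mem_Icc] at hk
    linear_combination 2 * p * v k ^ 2 * H.powSum_two_mul_sub hk.2
      - p * v k ^ 2 * (powSum v 1 m - powSum v 1 (m - k)) * H.two_mul_inv
      - 2 * v k ^ 2 * v 2 ^ 2 * (powSum v 2 m - powSum v 2 (m - k)) * H.sq_eq_zero
  have h2 : ∑ k ∈ Icc 1 m, v k ^ 2 = powSum v 2 m := rfl
  rw [h, H.sum_powSum_sub_mul_sq (by have := H.eq_two_mul; omega), h2]
  ring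

lemma mul_sum_powSum_mul_sq (H : IsInvSeq p m v) :
    4 * (p * ∑ k ∈ Icc 1 m, powSum v 1 k * v k ^ 2) = p * powSum v 3 m := by
  have hp := H.eq_two_mul
  have h1 := (sum_Icc_fold (fun k => p * powSum v 1 k * v k ^ 2) m).symm.trans
    (sum_Icc_even_odd _ m)
  have h2 : ∑ k ∈ Icc 1 m, (p * powSum v 1 k * v k ^ 2
      + p * powSum v 1 (2 * m + 1 - k) * v (2 * m + 1 - k) ^ 2)
      = 2 * (p * ∑ k ∈ Icc 1 m, powSum v 1 k * v k ^ 2) - p * powSum v 3 m := by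
    simp only [powSum.eq_1 v 3, mul_sum]
    rw [← sum_sub_distrib]
    refine sum_congr rfl fun k hk => ?_
    rw [mem_Icc] at hk
    obtain ⟨k, rfl⟩ : ∃ j, k = j + 1 := ⟨k - 1, by omega⟩
    rw [← hp, H.mul_powSum_sub (by omega), H.inv_sub (by omega) (by omega), powSum_succ]
    linear_combination (powSum v 1 k * (2 * v (k + 1) ^ 3 + p * v (k + 1) ^ 4)) * H.sq_eq_zero
  have h3 : ∑ k ∈ Icc 1 m, (p * powSum v 1 (2 * k) * v (2 * k) ^ 2
      + p * powSum v 1 (2 * m + 1 - 2 * k) * v (2 * m + 1 - 2 * k) ^ 2)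
      = v 2 ^ 2 * (2 * (p * ∑ k ∈ Icc 1 m, (powSum v 1 (2 * k) - v 2 * powSum v 1 k) * v k ^ 2)
        + 2 * v 2 * (p * ∑ k ∈ Icc 1 m, powSum v 1 k * v k ^ 2) - p * v 2 * powSum v 3 m) := by
    simp only [powSum.eq_1 v 3, mul_sum]
    rw [← sum_add_distrib, ← sum_sub_distrib, mul_sum]
    refine sum_congr rfl fun k hk => ?_
    rw [mem_Icc] at hk
    have h4 := powSum_succ v 1 (2 * k - 1)
    have h5 := H.mul_powSum_sub (k := 2 * k - 1) (by omega)
    rw [show 2 * k - 1 + 1 = 2 * k by omega] at h4 h5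
    rw [← hp, h5, h4, H.inv_sub (by omega) (by omega), H.inv_two_mul (by omega) (by omega)]
    linear_combination (powSum v 1 (2 * k - 1) * (2 * (v 2 * v k) ^ 3 + p * (v 2 * v k) ^ 4))
      * H.sq_eq_zero
  simp only [h2, h3] at h1
  have h4 := H.two_mul_inv
  have h5 : 4 * v 2 ^ 2 = 1 := by linear_combination (2 * v 2 + 1) * h4
  have h6 := H.mul_sum_odd_mul_sq
  generalize (p * ∑ k ∈ Icc 1 m, (powSum v 1 (2 * k) - v 2 * powSum v 1 k) * v k ^ 2) = W at *
  generalize (p * ∑ k ∈ Icc 1 m, powSum v 1 k * v k ^ 2) = V at *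
  generalize powSum v 3 m = K at *
  have h7 : 3 * (4 * V - p * K) = 0 := by
    linear_combination 8 * h1 + 2 * h6
      + 2 * (2 * W + 2 * v 2 * V - p * v 2 * K) * h5 + (2 * V - p * K) * h4
  linear_combination v 3 * h7 - (4 * V - p * K) * H.three_mul_inv

/-- The main sum in terms of half-range power sums. -/
lemma four_mul_sum_powSum_two_mul (H : IsInvSeq p m v) :
    4 * ∑ k ∈ Icc 1 m, powSum v 1 (2 * k) * v k
      = powSum v 1 m ^ 2 - powSum v 2 m
        + p * (∑ k ∈ Icc 1 m, powSum v 1 k * v k ^ 2 - 2 * powSum v 3 m) := by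
  have hp := H.eq_two_mul
  have h : ∑ k ∈ Icc 1 m, powSum v 1 (2 * k) * v k
      = v 2 * ∑ k ∈ Icc 1 m, powSum v 1 k * v k
        - v 2 * powSum v 1 m * ∑ k ∈ Icc 1 m, v k
        + v 2 * ∑ k ∈ Icc 1 m, powSum v 1 (m - k) * v k
        - p * v 2 ^ 2 * powSum v 2 m * ∑ k ∈ Icc 1 m, v k
        + p * v 2 ^ 2 * ∑ k ∈ Icc 1 m, powSum v 2 (m - k) * v k := by
    simp only [mul_sum]
    rw [← sum_sub_distrib, ← sum_add_distrib, ← sum_sub_distrib, ← sum_add_distrib]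
    refine sum_congr rfl fun k hk => ?_
    rw [mem_Icc] at hk
    linear_combination v k * H.powSum_two_mul_sub hk.2
  have h1 : ∑ k ∈ Icc 1 m, v k = powSum v 1 m := by simp [powSum]
  rw [h, h1, H.sum_powSum_sub_mul (by omega), H.sum_powSum_two_sub_mul (by omega)]
  have h4 := H.two_mul_inv
  have h5 : 4 * v 2 ^ 2 = 1 := by linear_combination (2 * v 2 + 1) * h4
  linear_combination 2 * v 2 * two_mul_sum_powSum_mul v m
    + p * (∑ k ∈ Icc 1 m, powSum v 1 k * v k ^ 2 - 2 * powSum v 3 m) * h5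
    + (powSum v 1 m ^ 2 - powSum v 2 m) * h4

lemma choose_pred (H : IsInvSeq p m v) {k : ℕ} (hk : k < p) :
    ((p - 1).choose k : A) = (-1) ^ k * (1 - p * powSum v 1 k) := by
  induction k with
  | zero => simp
  | succ k ih =>
    have h1 := congrArg (Nat.cast (R := A)) (Nat.choose_succ_right_eq (p - 1) k)
    have h2 := H.mul_inv (k + 1) (by omega) hk
    have h3 : ((p - 1 - k : ℕ) : A) = p - (k + 1 : ℕ) := by
      rw [Nat.sub_sub, add_comm 1 k, Nat.cast_sub hk.le]
    rw [Nat.cast_mul, Nat.cast_mul, h3, ih (by omega)] at h1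
    rw [powSum_succ]
    linear_combination v (k + 1) * h1 - ((p - 1).choose (k + 1)
      + (-1) ^ k * (1 - p * powSum v 1 k)) * h2
      - (-1) ^ k * powSum v 1 k * v (k + 1) * H.sq_eq_zero

/-- The expansion of `(1 + 1) ^ p` expresses the Fermat quotient through harmonic sums. -/
lemma two_mul_fermatQuotient (H : IsInvSeq p m v) (hp : p.Prime) {q : ℕ}
    (hq : 2 ^ (p - 1) = 1 + p * q) :
    2 * (q : A) = -powSum v 1 m + p * ∑ k ∈ Icc 1 m, powSum v 1 (2 * k) * v k := by
  have hpm := H.eq_two_mul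
  have h1 : 2 * q = ∑ k ∈ Icc 1 (2 * m), p.choose k / p := by
    have h2 : p * (2 * q) + 2 = p * ∑ k ∈ Icc 1 (2 * m), p.choose k / p + 2 := by
      have h3 : p * ∑ k ∈ Icc 1 (2 * m), p.choose k / p = ∑ k ∈ Icc 1 (2 * m), p.choose k := by
        rw [mul_sum]
        refine sum_congr rfl fun k hk => ?_
        rw [mem_Icc] at hk
        exact Nat.mul_div_cancel' (hp.dvd_choose_self (by omega) (by omega))
      have h4 := Nat.sum_range_choose p
      rw [sum_range_succ, sum_range_eq_add_Ico _ hp.pos, Nat.choose_zero_right, Nat.choose_self,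
        show Ico 1 p = Icc 1 (2 * m) by ext; simp only [mem_Ico, mem_Icc]; omega] at h4
      rw [h3, show p * (2 * q) + 2 = 2 * (1 + p * q) by ring, ← hq, ← pow_succ',
        Nat.sub_add_cancel hp.one_le, ← h4]
      ring
    exact Nat.eq_of_mul_eq_mul_left hp.pos (Nat.add_right_cancel h2)
  have h2 : ∀ k, 0 < k → k < p →
      ((p.choose k / p : ℕ) : A) = v k * ((-1) ^ (k - 1) * (1 - p * powSum v 1 (k - 1))) := by
    intro k h0 hk
    rw [← H.choose_pred (by omega)]
    have h3 : p.choose k / p * k = (p - 1).choose (k - 1) := by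
      refine Nat.eq_of_mul_eq_mul_left hp.pos ?_
      have h4 := Nat.add_one_mul_choose_eq (p - 1) (k - 1)
      rw [Nat.sub_add_cancel hp.one_le, Nat.sub_add_cancel h0] at h4
      rw [h4, ← mul_assoc, Nat.mul_div_cancel' (hp.dvd_choose_self (by omega) (by omega))]
    rw [← h3]
    push_cast
    linear_combination -((p.choose k / p : ℕ) : A) * H.mul_inv k h0 hk
  have h3 : 2 * (q : A) = -∑ k ∈ Icc 1 m, v k
      + p * ∑ k ∈ Icc 1 m, powSum v 1 (2 * k) * v k
      - 2 * v 2 ^ 2 * p * ∑ k ∈ Icc 1 m, v k ^ 2 := by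
    have h4 := congrArg (Nat.cast (R := A)) h1
    push_cast at h4
    rw [h4, sum_Icc_even_odd, ← sum_neg_distrib, mul_sum, mul_sum, ← sum_add_distrib,
      ← sum_sub_distrib]
    refine sum_congr rfl fun k hk => ?_
    rw [mem_Icc] at hk
    have h5 := powSum_succ v 1 (2 * k - 1)
    have h6 := H.mul_powSum_sub (k := 2 * k) (by omega)
    rw [show 2 * k - 1 + 1 = 2 * k by omega] at h5
    have h7 : Odd (2 * k - 1) := ⟨k - 1, by omega⟩
    have h8 : Even (p - 2 * k - 1) := ⟨m - k, by omega⟩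
    rw [← hpm, h2 _ (by omega) (by omega), h2 _ (by omega) (by omega), h7.neg_one_pow,
      h8.neg_one_pow, Nat.sub_sub, h6, H.inv_sub (by omega) (by omega)]
    rw [H.inv_two_mul (by omega) (by omega)] at *
    linear_combination -p * v 2 * v k * h5
      + (v 2 ^ 2 * v k ^ 2 * powSum v 1 (2 * k)) * H.sq_eq_zero
      - v k * (1 - p * powSum v 1 (2 * k)) * H.two_mul_inv
  have h4 : ∑ k ∈ Icc 1 m, v k = powSum v 1 m := by simp [powSum]
  have h5 : ∑ k ∈ Icc 1 m, v k ^ 2 = powSum v 2 m := rfl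
  rw [h3, h4, h5]
  linear_combination -2 * v 2 ^ 2 * H.mul_powSum_two

lemma mul_pow_pred (H : IsInvSeq p m v) (hp : p.Prime) {k : ℕ} (h0 : 0 < k) (hk : k < p) :
    (p : A) * k ^ (p - 1) = p := by
  obtain ⟨c, hc⟩ := exists_pow_pred_eq hp h0 hk
  have h := congrArg (Nat.cast (R := A)) hc
  push_cast at h
  linear_combination p * h + c * H.sq_eq_zero

lemma sub_pow_succ_of_even {n : ℕ} (hn : Even (n + 1)) (h : (p : A) ^ 2 = 0) (x : A) :
    (p - x) ^ (n + 1) = x ^ (n + 1) - (n + 1) * p * x ^ n := by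
  have key : ∀ n : ℕ, (x - p) ^ (n + 1) = x ^ (n + 1) - (n + 1) * p * x ^ n := by
    intro n
    induction n with
    | zero => simp
    | succ n ih =>
      rw [pow_succ, ih]
      push_cast
      linear_combination (n + 1) * x ^ n * h
  rw [← neg_sub, hn.neg_pow, key]

/-- The sum `∑ k ^ (p - 3)`, for which `p * B_{p - 3}` is the Faulhaber value. -/
lemma two_mul_sum_pow (H : IsInvSeq p m v) (hp : p.Prime) :
    2 * ∑ k ∈ Icc 1 (2 * m), (k : A) ^ (p - 3) = -(p * powSum v 3 m) := by
  have hpm := H.eq_two_mul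
  have hp3 := H.three_lt
  obtain ⟨n, hn⟩ : ∃ n, p = n + 4 := ⟨p - 4, by omega⟩
  have hev : Even (n + 1) := ⟨m - 1, by omega⟩
  have hcast : (n : A) = p - 4 := by rw [hn]; push_cast; ring
  have hK : ∀ k, 0 < k → k < p → (p : A) * k ^ n = p * v k ^ 3 := by
    intro k h0 hk
    have h1 := H.mul_pow_pred hp h0 hk
    have h2 := H.mul_inv k h0 hk
    rw [show p - 1 = n + 3 by omega, pow_add] at h1
    have h3 : (k : A) ^ 3 * v k ^ 3 = 1 := by rw [← mul_pow, h2, one_pow]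
    linear_combination v k ^ 3 * h1 - p * k ^ n * h3
  have h1 := sum_Icc_fold (fun k => (k : A) ^ (n + 1)) m
  have h2 := sum_Icc_even_odd (fun k => (k : A) ^ (n + 1)) m
  rw [show p - 3 = n + 1 by omega]
  have hsub : ∀ k, 0 < k → k < p →
      ((p - k : ℕ) : A) ^ (n + 1) = k ^ (n + 1) + 3 * p * v k ^ 3 := by
    intro k h0 hk
    rw [Nat.cast_sub hk.le, sub_pow_succ_of_even hev H.sq_eq_zero, hcast]
    linear_combination 3 * hK k h0 hk - k ^ n * H.sq_eq_zero
  have h3 : ∑ k ∈ Icc 1 m, ((k : A) ^ (n + 1) + ((2 * m + 1 - k : ℕ) : A) ^ (n + 1))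
      = 2 * ∑ k ∈ Icc 1 m, (k : A) ^ (n + 1) + 3 * p * powSum v 3 m := by
    rw [powSum, mul_sum, mul_sum, ← sum_add_distrib]
    refine sum_congr rfl fun k hk => ?_
    rw [mem_Icc] at hk
    rw [← hpm, hsub k (by omega) (by omega)]
    ring
  have h4 : ∑ k ∈ Icc 1 m, (((2 * k : ℕ) : A) ^ (n + 1)
        + ((2 * m + 1 - 2 * k : ℕ) : A) ^ (n + 1))
      = 2 * 2 ^ (n + 1) * ∑ k ∈ Icc 1 m, (k : A) ^ (n + 1)
        + 3 * p * v 2 ^ 3 * powSum v 3 m := by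
    rw [powSum, mul_sum, mul_sum, ← sum_add_distrib]
    refine sum_congr rfl fun k hk => ?_
    rw [mem_Icc] at hk
    rw [← hpm, hsub (2 * k) (by omega) (by omega), H.inv_two_mul (by omega) (by omega)]
    push_cast
    ring
  rw [h3] at h1
  rw [h4] at h2
  obtain ⟨q, hq⟩ : ∃ q : A, 4 * 2 ^ (n + 1) = 1 + p * q := by
    obtain ⟨c, hc⟩ := exists_pow_pred_eq hp two_pos (by omega)
    have h8 := congrArg (Nat.cast (R := A)) hc
    push_cast at h8
    rw [show p - 1 = n + 1 + 2 by omega, pow_add] at h8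
    exact ⟨c, by linear_combination h8⟩
  have h7 : 8 * v 2 ^ 3 = 1 := by
    linear_combination (4 * v 2 ^ 2 + 2 * v 2 + 1) * H.two_mul_inv
  generalize ∑ k ∈ Icc 1 m, (k : A) ^ (n + 1) = Y at *
  generalize ∑ k ∈ Icc 1 (2 * m), (k : A) ^ (n + 1) = P at *
  generalize powSum v 3 m = K at *
  have h8 : 12 * Y = -21 * (p * K) + 4 * p * q * Y := by
    linear_combination 8 * (h2 - h1) + 4 * Y * hq + 3 * p * K * h7
  have h9 : 12 * (p * Y) = 0 := by
    linear_combination p * h8 + (-21 * K + 4 * q * Y) * H.sq_eq_zero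
  have h10 : p * Y = 0 := by
    linear_combination v 2 ^ 2 * v 3 * h9 - 4 * v 2 ^ 2 * p * Y * H.three_mul_inv
      - (2 * v 2 + 1) * p * Y * H.two_mul_inv
  have h11 : 3 * (2 * P + p * K) = 0 := by
    linear_combination 6 * h1 + h8 + 4 * q * h10
  linear_combination v 3 * h11 - (2 * P + p * K) * H.three_mul_inv

/-- The congruence, with `p * B_{p - 3}` replaced by `∑ k ^ (p - 3)`. -/
theorem sum_powSum_two_mul (H : IsInvSeq p m v) (hp : p.Prime) {q : ℕ}
    (hq : 2 ^ (p - 1) = 1 + p * q) :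
    24 * ∑ k ∈ Icc 1 m, powSum v 1 (2 * k) * v k
      = 24 * ((q : A) ^ 2 - p * q ^ 3) + 7 * ∑ k ∈ Icc 1 (2 * m), (k : A) ^ (p - 3) := by
  have h1 := H.four_mul_sum_powSum_two_mul
  have h2 := H.mul_sum_powSum_mul_sq
  have h3 := H.two_mul_fermatQuotient hp hq
  have h4 := H.two_mul_sum_pow hp
  have h5 := H.six_mul_powSum_two
  have h6 := H.mul_powSum_two
  have h7 := H.sq_eq_zero
  have h8 := H.two_mul_inv
  generalize ∑ k ∈ Icc 1 m, powSum v 1 k * v k ^ 2 = V at *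
  generalize ∑ k ∈ Icc 1 (2 * m), (k : A) ^ (p - 3) = P at *
  generalize ∑ k ∈ Icc 1 m, powSum v 1 (2 * k) * v k = S at *
  generalize powSum v 1 m = h at *
  generalize powSum v 2 m = X at *
  generalize powSum v 3 m = K at *
  have h9 : p * h = -2 * (p * q) := by linear_combination p * h3 + S * h7
  have h10 : 4 * (p * (S - q ^ 2)) = 0 := by
    linear_combination p * h1 - h6 + (V - 2 * K) * h7 + (h - 2 * q) * h9
  have h11 : p * (S - q ^ 2) = 0 := by
    linear_combination v 2 ^ 2 * h10 - (2 * v 2 + 1) * p * (S - q ^ 2) * h8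
  have h12 : h = -2 * q + p * q ^ 2 := by linear_combination h3 + h11
  have h13 : 2 * (24 * S - 24 * (q ^ 2 - p * q ^ 3) - 7 * P) = 0 := by
    rw [h12] at h1
    linear_combination 12 * h1 - 2 * h5 - 7 * h4 + 3 * h2 + 12 * q ^ 4 * h7
  linear_combination v 2 * h13 - (24 * S - 24 * (q ^ 2 - p * q ^ 3) - 7 * P) * h8

end IsInvSeq

section Integers

variable {p : ℕ} [Fact p.Prime]

variable (p) in
/-- The ring of `p`-integral rational numbers. -/
abbrev pIntegers : Subring ℚ := (Rat.padicValuation p).integer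

lemma mem_pIntegers_iff {x : ℚ} : x ∈ pIntegers p ↔ ¬ p ∣ x.den :=
  Rat.padicValuation_le_one_iff

lemma inv_natCast_mem_pIntegers {k : ℕ} (hk : ¬ p ∣ k) : ((k : ℚ)⁻¹) ∈ pIntegers p := by
  rcases Nat.eq_zero_or_pos k with rfl | h0
  · simp
  · rw [mem_pIntegers_iff, Rat.inv_natCast_den_of_pos h0]
    exact hk

lemma inv_mem_pIntegers_of_lt {k : ℕ} (h0 : 0 < k) (hk : k < p) : ((k : ℚ)⁻¹) ∈ pIntegers p :=
  inv_natCast_mem_pIntegers (Nat.not_dvd_of_pos_of_lt h0 hk)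

lemma bernoulli'_mem_pIntegers {n : ℕ} (hn : n + 1 < p) : bernoulli' n ∈ pIntegers p := by
  induction n using Nat.strong_induction_on with
  | _ n ih =>
    rw [bernoulli'_def]
    refine sub_mem (one_mem _) (sum_mem fun k hk => ?_)
    rw [mem_range] at hk
    have h : (n : ℚ) - k + 1 = ((n - k + 1 : ℕ) : ℚ) := by
      rw [Nat.cast_add, Nat.cast_sub hk.le, Nat.cast_one]
    rw [h, div_eq_mul_inv]
    exact mul_mem (mul_mem (natCast_mem _ _) (inv_mem_pIntegers_of_lt (by omega) (by omega)))
      (ih k hk (by omega))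

lemma bernoulli_mem_pIntegers {n : ℕ} (hn : n + 1 < p) : bernoulli n ∈ pIntegers p := by
  rw [bernoulli]
  exact mul_mem (pow_mem (neg_mem (one_mem _)) _) (bernoulli'_mem_pIntegers hn)

/-- Faulhaber's formula modulo `p ^ 2`. -/
lemma exists_sum_pow_eq_mul_bernoulli {n : ℕ} (hn : n + 1 < p) :
    ∃ c ∈ pIntegers p, ∑ k ∈ range p, (k : ℚ) ^ n = p * bernoulli n + c * p ^ 2 := by
  have hn0 : ((n : ℚ) + 1) ≠ 0 := by positivity
  refine ⟨∑ i ∈ range n, bernoulli i * ((n + 1).choose i) * (p : ℚ) ^ (n - 1 - i)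
    * ((n + 1 : ℕ) : ℚ)⁻¹, sum_mem fun i hi => ?_, ?_⟩
  · rw [mem_range] at hi
    exact mul_mem (mul_mem (mul_mem (bernoulli_mem_pIntegers (by omega)) (natCast_mem _ _))
      (pow_mem (natCast_mem _ _) _)) (inv_mem_pIntegers_of_lt (by omega) hn)
  · rw [sum_range_pow, sum_range_succ, sum_mul, add_comm]
    congr 1
    · rw [Nat.choose_succ_self_right, Nat.add_sub_cancel_left]
      push_cast
      field_simp
    · refine sum_congr rfl fun i hi => ?_
      rw [mem_range] at hi
      rw [show n + 1 - i = n - 1 - i + 2 by omega, pow_add]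
      push_cast
      ring

variable (p) in
open Classical in
/-- The sequence `1 / k` of `p`-integral rationals, with value `0` where `1 / k` is not
`p`-integral. -/
noncomputable def integerInv (k : ℕ) : pIntegers p :=
  if h : ((k : ℚ)⁻¹) ∈ pIntegers p then ⟨(k : ℚ)⁻¹, h⟩ else 0

lemma coe_integerInv {k : ℕ} (h0 : 0 < k) (hk : k < p) :
    (integerInv p k : ℚ) = (k : ℚ)⁻¹ := by
  rw [integerInv, dif_pos (inv_mem_pIntegers_of_lt h0 hk)]

lemma coe_powSum_integerInv {n : ℕ} (hn : n < p) :
    ((powSum (integerInv p) 1 n : pIntegers p) : ℚ) = harmonic n := by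
  rw [harmonic_eq_sum_Icc, powSum]
  push_cast
  refine sum_congr rfl fun k hk => ?_
  rw [mem_Icc] at hk
  rw [pow_one, coe_integerInv (by omega) (by omega)]

lemma isInvSeq_integerInv {m : ℕ} (hpm : p = 2 * m + 1) (hp3 : 3 < p) :
    IsInvSeq p m
      (fun k => Ideal.Quotient.mk (Ideal.span {(p : pIntegers p) ^ 2}) (integerInv p k)) where
  eq_two_mul := hpm
  three_lt := hp3
  sq_eq_zero := by
    rw [← map_natCast (Ideal.Quotient.mk (Ideal.span {(p : pIntegers p) ^ 2})), ← map_pow,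
      Ideal.Quotient.eq_zero_iff_mem]
    exact Ideal.mem_span_singleton_self _
  mul_inv k h0 hk := by
    rw [← map_natCast (Ideal.Quotient.mk (Ideal.span {(p : pIntegers p) ^ 2})), ← map_mul, ← map_one
      (Ideal.Quotient.mk (Ideal.span {(p : pIntegers p) ^ 2}))]
    congr 1
    apply Subtype.ext
    push_cast
    rw [coe_integerInv h0 hk]
    exact mul_inv_cancel₀ (by positivity)

lemma exists_sum_harmonic_eq {m q : ℕ} (hpm : p = 2 * m + 1) (hp3 : 3 < p)
    (hq : 2 ^ (p - 1) = 1 + p * q) :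
    ∃ c ∈ pIntegers p, 24 * ∑ k ∈ Icc 1 m, harmonic (2 * k) / k
      = 24 * ((q : ℚ) ^ 2 - p * q ^ 3) + 7 * ∑ k ∈ range p, (k : ℚ) ^ (p - 3) + c * p ^ 2 := by
  have hps : ∀ n, powSum (fun k => Ideal.Quotient.mk (Ideal.span {(p : pIntegers p) ^ 2})
      (integerInv p k)) 1 n = Ideal.Quotient.mk _ (powSum (integerInv p) 1 n) := by
    intro n
    simp [powSum]
  have h1 : Ideal.Quotient.mk (Ideal.span {(p : pIntegers p) ^ 2})
      (24 * ∑ k ∈ Icc 1 m, powSum (integerInv p) 1 (2 * k) * integerInv p k)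
      = Ideal.Quotient.mk _ (24 * ((q : pIntegers p) ^ 2 - p * q ^ 3)
        + 7 * ∑ k ∈ Icc 1 (2 * m), (k : pIntegers p) ^ (p - 3)) := by
    simpa [hps, map_ofNat] using (isInvSeq_integerInv hpm hp3).sum_powSum_two_mul Fact.out hq
  rw [Ideal.Quotient.eq, Ideal.mem_span_singleton'] at h1
  obtain ⟨c, hc⟩ := h1
  refine ⟨c, c.2, ?_⟩
  have h2 := congrArg Subtype.val hc
  have h3 : ∑ k ∈ Icc 1 m, harmonic (2 * k) / k = ((∑ k ∈ Icc 1 m,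
      powSum (integerInv p) 1 (2 * k) * integerInv p k : pIntegers p) : ℚ) := by
    push_cast
    refine sum_congr rfl fun k hk => ?_
    rw [mem_Icc] at hk
    rw [coe_powSum_integerInv (by omega), coe_integerInv (by omega) (by omega), div_eq_mul_inv]
  have h4 : ∑ k ∈ range p, (k : ℚ) ^ (p - 3)
      = ((∑ k ∈ Icc 1 (2 * m), (k : pIntegers p) ^ (p - 3) : pIntegers p) : ℚ) := by
    push_cast
    rw [sum_range_eq_add_Ico _ (by omega), Nat.cast_zero, zero_pow (by omega), zero_add]
    refine sum_congr ?_ fun _ _ => rfl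
    ext
    simp only [mem_Ico, mem_Icc]
    omega
  have h5 : ((24 : pIntegers p) : ℚ) = 24 := map_ofNat (pIntegers p).subtype 24
  have h6 : ((7 : pIntegers p) : ℚ) = 7 := map_ofNat (pIntegers p).subtype 7
  rw [h3, h4]
  push_cast at h2 ⊢
  rw [h5, h6] at h2
  linear_combination -h2

end Integers

theorem sum_H2k_div_k (p : ℕ) (hp : p.Prime) (hp3 : 3 < p) :
    ratCongr p 2
      (∑ k ∈ Finset.Icc 1 ((p - 1) / 2), harmonic (2 * k) / k)
      (fermatQ p ^ 2 - p * fermatQ p ^ 3 + (7 / 24) * p * bernoulli (p - 3)) := by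
  have : Fact p.Prime := ⟨hp⟩
  have hp0 : (p : ℚ) ≠ 0 := by positivity
  obtain ⟨m, hpm⟩ := hp.odd_of_ne_two (by omega)
  obtain ⟨q, hq⟩ := exists_pow_pred_eq hp two_pos (by omega)
  have hQ : fermatQ p = q := by
    rw [fermatQ, div_eq_iff hp0, sub_eq_iff_eq_add]
    exact_mod_cast (by rw [hq]; ring : 2 ^ (p - 1) = q * p + 1)
  obtain ⟨c, hc, h1⟩ := exists_sum_harmonic_eq hpm hp3 hq
  obtain ⟨d, hd, h2⟩ := exists_sum_pow_eq_mul_bernoulli (p := p) (n := p - 3) (by omega)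
  rw [hQ, show (p - 1) / 2 = m by omega]
  refine ⟨(c + 7 * d) * ((24 : ℕ) : ℚ)⁻¹, ?_, mem_pIntegers_iff.1 (mul_mem (add_mem hc
    (mul_mem (natCast_mem _ 7) hd)) (inv_natCast_mem_pIntegers fun h => ?_))⟩
  · push_cast
    linear_combination h1 / 24 + 7 / 24 * h2
  · rw [show 24 = 2 ^ 3 * 3 by norm_num, hp.dvd_mul] at h
    rcases h with h | h
    · have := Nat.le_of_dvd two_pos (hp.dvd_of_dvd_pow h)
      omega
    · have := Nat.le_of_dvd three_pos h
      omega
end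

section
/- Let p > 3 be a prime. Then ∑_{k=1}^{(p-1)/2} H_{(p+1)/2-k}/k ≡ -8·q_p(2) + 4·q_p(2)^2 + 4p·q_p(2)^2 + 8p·q_p(2) - 4p·q_p(2)^3 - (7/3)·p·B_{p-3} modulo p^2 (as rational numbers). -/
open Finset

/-! ### Splitting sums and products over `1, …, 2n` -/

/-- Pairing `k` with `2n + 1 - k`. -/
lemma prod_range_two_mul_eq_prod_reflect {M : Type*} [CommMonoid M] (n : ℕ) (f : ℕ → M) :
    ∏ k ∈ range (2 * n), f (k + 1) =
      ∏ k ∈ range n, f (k + 1) * f (2 * n + 1 - (k + 1)) := by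
  rw [two_mul, prod_range_add, prod_mul_distrib,
    ← prod_range_reflect (fun k => f (n + k + 1)) n]
  congr 1
  refine prod_congr rfl fun k hk => congrArg f ?_
  have := mem_range.1 hk
  omega

/-- Splitting into the even numbers `2k` and the odd numbers `2n + 1 - 2k`. -/
lemma prod_range_two_mul_eq_prod_even_odd {M : Type*} [CommMonoid M] (n : ℕ) (f : ℕ → M) :
    ∏ k ∈ range (2 * n), f (k + 1) =
      ∏ k ∈ range n, f (2 * (k + 1)) * f (2 * n + 1 - 2 * (k + 1)) := by
  have key : ∏ k ∈ range (2 * n), f (k + 1) =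
      ∏ k ∈ range n, f (2 * (k + 1)) * f (2 * k + 1) := by
    induction n with
    | zero => simp
    | succ n ih =>
      rw [show 2 * (n + 1) = 2 * n + 1 + 1 by ring, prod_range_succ, prod_range_succ, ih,
        prod_range_succ, mul_assoc, mul_comm (f (2 * n + 1))]
      rfl
  rw [key, prod_mul_distrib, prod_mul_distrib,
    ← prod_range_reflect (fun k => f (2 * k + 1)) n]
  congr 1
  refine prod_congr rfl fun k hk => congrArg f ?_
  have := mem_range.1 hk
  omega

lemma sum_range_two_mul_eq_sum_reflect {M : Type*} [AddCommMonoid M] (n : ℕ) (f : ℕ → M) :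
    ∑ k ∈ range (2 * n), f (k + 1) =
      ∑ k ∈ range n, (f (k + 1) + f (2 * n + 1 - (k + 1))) :=
  prod_range_two_mul_eq_prod_reflect (M := Multiplicative M) n f

lemma sum_range_two_mul_eq_sum_even_odd {M : Type*} [AddCommMonoid M] (n : ℕ) (f : ℕ → M) :
    ∑ k ∈ range (2 * n), f (k + 1) =
      ∑ k ∈ range n, (f (2 * (k + 1)) + f (2 * n + 1 - 2 * (k + 1))) :=
  prod_range_two_mul_eq_prod_even_odd (M := Multiplicative M) n f

section CommRing

variable {R : Type*} [CommRing R]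

/-- If `f (p - k) ≡ f k + p g k` modulo `p²` for `0 < k < p = 2n + 1`, and `f`, `g` are
homogeneous under doubling, then the full sum of `f` has two expressions in terms of
half sums of `f` and `g`. -/
lemma sq_dvd_sum_sub_half_sums {n : ℕ} {P u v : R} {f g : ℕ → R}
    (hfg : ∀ k, 0 < k → k < 2 * n + 1 → P ^ 2 ∣ f (2 * n + 1 - k) - (f k + P * g k))
    (hu : ∀ k, 0 < k → k ≤ n → f (2 * k) = u * f k)
    (hv : ∀ k, 0 < k → k ≤ n → g (2 * k) = v * g k) :
    P ^ 2 ∣ ∑ k ∈ range (2 * n), f (k + 1) -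
        (2 * ∑ k ∈ range n, f (k + 1) + P * ∑ k ∈ range n, g (k + 1)) ∧
      P ^ 2 ∣ ∑ k ∈ range (2 * n), f (k + 1) -
        (2 * u * ∑ k ∈ range n, f (k + 1) + P * v * ∑ k ∈ range n, g (k + 1)) := by
  constructor
  · rw [sum_range_two_mul_eq_sum_reflect, mul_sum, mul_sum, ← sum_add_distrib,
      ← sum_sub_distrib]
    refine dvd_sum fun k hk => ?_
    have hk := mem_range.1 hk
    convert hfg (k + 1) (by omega) (by omega) using 1
    ring
  · rw [sum_range_two_mul_eq_sum_even_odd, mul_sum, mul_sum, ← sum_add_distrib,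
      ← sum_sub_distrib]
    refine dvd_sum fun k hk => ?_
    have hk := mem_range.1 hk
    convert hfg (2 * (k + 1)) (by omega) (by omega) using 1
    rw [hu (k + 1) (by omega) (by omega), hv (k + 1) (by omega) (by omega)]
    ring

/-- Second order expansion of `∏ (1 - P a_k)`. -/
lemma cube_dvd_prod_one_sub_mul (P h : R) (hh : 2 * h = 1) (a : ℕ → R) (n : ℕ) :
    P ^ 3 ∣ ∏ k ∈ range n, (1 - P * a k) - (1 - P * ∑ k ∈ range n, a k +
      P ^ 2 * h * ((∑ k ∈ range n, a k) ^ 2 - ∑ k ∈ range n, a k ^ 2)) := by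
  induction n with
  | zero => simp
  | succ n ih =>
    obtain ⟨c, hc⟩ := ih
    simp only [prod_range_succ, sum_range_succ]
    set s := ∑ k ∈ range n, a k
    set t := ∑ k ∈ range n, a k ^ 2
    refine ⟨c * (1 - P * a n) - h * (s ^ 2 - t) * a n, ?_⟩
    linear_combination (1 - P * a n) * hc - P ^ 2 * s * a n * hh

lemma sq_dvd_sub_pow_sub_pow {p k m : ℕ} (hk : k ≤ p) (hm : Even m) (hm0 : 0 < m) :
    (p : R) ^ 2 ∣ ((p - k : ℕ) : R) ^ m - ((k : R) ^ m + p * (-m * (k : R) ^ (m - 1))) := by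
  obtain ⟨m, rfl⟩ : ∃ l, m = l + 1 := ⟨m - 1, by omega⟩
  obtain ⟨c, hc⟩ := Polynomial.binomExpansion (Polynomial.X ^ (m + 1) : Polynomial R) (k : R) (-p)
  refine ⟨c, ?_⟩
  simp only [Polynomial.eval_pow, Polynomial.eval_X, Polynomial.derivative_X_pow,
    Polynomial.eval_mul, Polynomial.eval_C] at hc
  rw [Nat.cast_sub hk, ← hm.neg_pow, neg_sub]
  simp only [add_tsub_cancel_right] at hc ⊢
  linear_combination hc

lemma sq_dvd_inv_sub_sq {p k : ℕ} (hk : k ≤ p) {a b : R} (ha : k * a = 1)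
    (hb : ((p - k : ℕ) : R) * b = 1) :
    (p : R) ^ 2 ∣ b ^ 2 - (a ^ 2 + p * (2 * a ^ 3)) := by
  rw [Nat.cast_sub hk] at hb
  have h : b = -a + p * a * b := by linear_combination -a * hb - b * ha
  refine ⟨a ^ 2 * b * (b - 2 * a), ?_⟩
  linear_combination (b - a + p * a * b - 2 * p * a ^ 2) * h

end CommRing

section Inverses

variable {R : Type*} [CommRing R] {n : ℕ} {i : ℕ → R}

lemma inv_two_mul_eq {h : R} (hi : ∀ k, 0 < k → k < 2 * n + 1 → (k : R) * i k = 1)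
    (hh : 2 * h = 1) {k : ℕ} (hk : 0 < k) (hkn : k ≤ n) : i (2 * k) = h * i k := by
  have h₁ := hi k hk (by omega)
  have h₂ := hi (2 * k) (by omega) (by omega)
  push_cast at h₂
  linear_combination -(i (2 * k)) * h₁ * 2 * h - i (2 * k) * hh + h * i k * h₂

lemma four_pow_mul_prod_one_sub {h : R} (hi : ∀ k, 0 < k → k < 2 * n + 1 → (k : R) * i k = 1)
    (hh : 2 * h = 1) :
    4 ^ n * ∏ k ∈ range n, (1 - ((2 * n + 1 : ℕ) : R) * (h * i (k + 1))) =
      ∏ k ∈ range n, (1 - ((2 * n + 1 : ℕ) : R) * i (k + 1)) := by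
  have key := (prod_range_two_mul_eq_prod_even_odd n (fun k => (k : R))).symm.trans
    (prod_range_two_mul_eq_prod_reflect n (fun k => (k : R)))
  have key := congrArg (· * ∏ k ∈ range n, (-(i (k + 1)) ^ 2)) key
  simp only [← prod_mul_distrib] at key
  rw [← card_range n, ← prod_const, card_range, ← prod_mul_distrib]
  convert key using 1
  · refine prod_congr rfl fun k hk => ?_
    have hk := mem_range.1 hk
    have hik := hi (k + 1) (by omega) (by omega)
    rw [Nat.cast_sub (by omega)]
    push_cast at hik ⊢
    linear_combination (-4 * (1 + (k + 1) * i (k + 1)) + 2 * (2 * n + 1) * i (k + 1)) * hik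
      - 2 * (2 * n + 1) * i (k + 1) * hh
  · refine prod_congr rfl fun k hk => ?_
    have hk := mem_range.1 hk
    have hik := hi (k + 1) (by omega) (by omega)
    rw [Nat.cast_sub (by omega)]
    push_cast at hik ⊢
    linear_combination (-(1 + (k + 1) * i (k + 1)) + (2 * n + 1) * i (k + 1)) * hik

/-- The half harmonic sum is `-2q + p q²` modulo `p²`, where `1 + p q = 2 ^ (p - 1)`. -/
lemma sq_dvd_half_harmonic_sub [IsDomain R] {h q : R}
    (hi : ∀ k, 0 < k → k < 2 * n + 1 → (k : R) * i k = 1) (hh : 2 * h = 1)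
    (hP : ((2 * n + 1 : ℕ) : R) ≠ 0) (hq : 1 + ((2 * n + 1 : ℕ) : R) * q = 4 ^ n)
    (hA : ((2 * n + 1 : ℕ) : R) ∣ ∑ k ∈ range n, i (k + 1) ^ 2) :
    ((2 * n + 1 : ℕ) : R) ^ 2 ∣
      ∑ k ∈ range n, i (k + 1) - (-2 * q + ((2 * n + 1 : ℕ) : R) * q ^ 2) := by
  have hprod := four_pow_mul_prod_one_sub hi hh
  obtain ⟨c₁, hc₁⟩ := cube_dvd_prod_one_sub_mul ((2 * n + 1 : ℕ) : R) h hh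
    (fun k => h * i (k + 1)) n
  obtain ⟨c₂, hc₂⟩ := cube_dvd_prod_one_sub_mul ((2 * n + 1 : ℕ) : R) h hh
    (fun k => i (k + 1)) n
  simp only [mul_pow, ← mul_sum] at hc₁ hc₂
  rw [← hq] at hprod
  obtain ⟨a, ha⟩ := hA
  generalize ((2 * n + 1 : ℕ) : R) = P at *
  set H := ∑ k ∈ range n, i (k + 1)
  set A := ∑ k ∈ range n, i (k + 1) ^ 2
  set e := 2 * c₂ - 2 * (q * h ^ 3 * (H ^ 2 - A) + c₁ + P * q * c₁)
  have hE : H = -2 * q + P * ((1 - h ^ 2) * (H ^ 2 - A) + q * H + P * e) := by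
    refine mul_left_cancel₀ hP ?_
    linear_combination -2 * (1 + P * q) * hc₁ + 2 * hc₂ + 2 * hprod -
      (-P * H - P ^ 2 * (H ^ 2 - A) * (1 - h ^ 2) - P ^ 2 * q * H) * hh
  set d := (1 - h ^ 2) * (H ^ 2 - A) + q * H + P * e with hd
  refine ⟨(1 - h ^ 2) * (-4 * q * d + P * d ^ 2 - a) + q * d + e, ?_⟩
  have hX : H ^ 2 - A = 4 * q ^ 2 + P * (-4 * q * d + P * d ^ 2 - a) := by
    rw [ha]
    linear_combination (H - 2 * q + P * d) * hE
  linear_combination hE + P * hd + P * (1 - h ^ 2) * hX + P * q * hE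
    - P * q ^ 2 * (2 * h + 1) * hh

/-- The half sum of inverse squares in terms of the half sum of inverse cubes modulo `p²`. -/
lemma sq_dvd_half_inv_sq_sum {h : R}
    (hi : ∀ k, 0 < k → k < 2 * n + 1 → (k : R) * i k = 1) (hh : 2 * h = 1) :
    ((2 * n + 1 : ℕ) : R) ^ 2 ∣ 6 * ∑ k ∈ range n, i (k + 1) ^ 2 +
      7 * ((2 * n + 1 : ℕ) : R) * ∑ k ∈ range n, i (k + 1) ^ 3 := by
  obtain ⟨⟨c₁, hc₁⟩, ⟨c₂, hc₂⟩⟩ := sq_dvd_sum_sub_half_sums (n := n)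
    (P := ((2 * n + 1 : ℕ) : R)) (u := h ^ 2) (v := h ^ 3)
    (f := fun k => i k ^ 2) (g := fun k => 2 * i k ^ 3)
    (fun k hk hkn => sq_dvd_inv_sub_sq hkn.le (hi k hk hkn) (hi _ (by omega) (by omega)))
    (fun k hk hkn => by simp only [inv_two_mul_eq hi hh hk hkn]; ring)
    (fun k hk hkn => by simp only [inv_two_mul_eq hi hh hk hkn]; ring)
  simp only [← mul_sum] at hc₁ hc₂
  generalize ((2 * n + 1 : ℕ) : R) = P at *
  refine ⟨4 * c₂ - 4 * c₁, ?_⟩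
  generalize ∑ k ∈ range n, i (k + 1) ^ 2 = A at *
  generalize ∑ k ∈ range n, i (k + 1) ^ 3 = T at *
  linear_combination 4 * hc₂ - 4 * hc₁ + (2 * A * (2 * h + 1) + P * T * (4 * h ^ 2 + 2 * h + 1)) * hh

/-- The half sum of `(m - 1)`-st powers in terms of the full sum of `m`-th powers. -/
lemma sq_dvd_pow_sum {m : ℕ} (hm : Even m) (hm0 : 0 < m) :
    ((2 * n + 1 : ℕ) : R) ^ 2 ∣ (2 ^ m - 1) * ∑ k ∈ range (2 * n), ((k + 1 : ℕ) : R) ^ m +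
      2 ^ (m - 1) * ((2 * n + 1 : ℕ) : R) * m *
        ∑ k ∈ range n, ((k + 1 : ℕ) : R) ^ (m - 1) := by
  obtain ⟨⟨c₁, hc₁⟩, ⟨c₂, hc₂⟩⟩ := sq_dvd_sum_sub_half_sums (n := n)
    (P := ((2 * n + 1 : ℕ) : R)) (u := 2 ^ m) (v := 2 ^ (m - 1))
    (f := fun k => (k : R) ^ m) (g := fun k => -m * (k : R) ^ (m - 1))
    (fun k hk hkn => sq_dvd_sub_pow_sub_pow hkn.le hm hm0)
    (fun k hk hkn => by push_cast; ring)
    (fun k hk hkn => by push_cast; ring)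
  simp only [← mul_sum] at hc₁ hc₂
  have h2 : (2 : R) ^ m = 2 * 2 ^ (m - 1) := by
    rw [← pow_succ', Nat.sub_add_cancel hm0]
  refine ⟨2 ^ m * c₁ - c₂, ?_⟩
  generalize ((2 * n + 1 : ℕ) : R) = P at *
  generalize ∑ k ∈ range n, ((k + 1 : ℕ) : R) ^ (m - 1) = T at *
  generalize ∑ k ∈ range n, ((k + 1 : ℕ) : R) ^ m = A at *
  linear_combination 2 ^ m * hc₁ - hc₂ - P * m * T * h2

end Inverses

lemma natCast_dvd_pow_card_sub_one_sub_one {R : Type*} [CommRing R] {p k : ℕ} (hp : p.Prime)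
    (hk : 0 < k) (hkp : k < p) : (p : R) ∣ (k : R) ^ (p - 1) - 1 := by
  have hcop : IsCoprime (k : ℤ) p :=
    Nat.isCoprime_iff_coprime.2
      (Nat.Coprime.symm ((Nat.Prime.coprime_iff_not_dvd hp).2 (Nat.not_dvd_of_pos_of_lt hk hkp)))
  have := map_dvd (Int.castRingHom R) (Int.ModEq.pow_card_sub_one_eq_one hp hcop).symm.dvd
  simpa using this

/-- The half sum of inverse cubes is `-2 B` modulo `p`, whenever `p B` is congruent
to the sum of `(p - 3)`-rd powers modulo `p²`. -/
lemma natCast_dvd_half_inv_cube_sum {R : Type*} [CommRing R] [IsDomain R] {n : ℕ} {i : ℕ → R}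
    {B : R} (hp : (2 * n + 1).Prime) (hn : 2 ≤ n)
    (hi : ∀ k, 0 < k → k < 2 * n + 1 → (k : R) * i k = 1)
    (hP : ((2 * n + 1 : ℕ) : R) ≠ 0)
    (hB : ((2 * n + 1 : ℕ) : R) ^ 2 ∣
      ∑ k ∈ range (2 * n), ((k + 1 : ℕ) : R) ^ (2 * n - 2) - ((2 * n + 1 : ℕ) : R) * B) :
    ((2 * n + 1 : ℕ) : R) ∣ ∑ k ∈ range n, i (k + 1) ^ 3 + 2 * B := by
  obtain ⟨c, hc⟩ := sq_dvd_pow_sum (R := R) (n := n) (m := 2 * n - 2)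
    ⟨n - 1, by omega⟩ (by omega)
  obtain ⟨b, hb⟩ := hB
  have hT : ((2 * n + 1 : ℕ) : R) ∣ ∑ k ∈ range n, ((k + 1 : ℕ) : R) ^ (2 * n - 2 - 1) -
      ∑ k ∈ range n, i (k + 1) ^ 3 := by
    rw [← sum_sub_distrib]
    refine dvd_sum fun k hk => ?_
    have hk := mem_range.1 hk
    have hik := hi (k + 1) (by omega) (by omega)
    obtain ⟨z, hz⟩ := natCast_dvd_pow_card_sub_one_sub_one (R := R) (k := k + 1) hp
      (by omega) (by omega)
    rw [show 2 * n + 1 - 1 = 2 * n - 2 - 1 + 3 by omega, pow_add] at hz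
    generalize ((k + 1 : ℕ) : R) = K at *
    refine ⟨z * i (k + 1) ^ 3, ?_⟩
    have hcube : (K * i (k + 1)) ^ 3 = 1 := by rw [hik, one_pow]
    linear_combination i (k + 1) ^ 3 * hz - K ^ (2 * n - 2 - 1) * hcube
  obtain ⟨t, ht⟩ := hT
  obtain ⟨q, hq⟩ := natCast_dvd_pow_card_sub_one_sub_one (R := R) (k := 2) hp
    (by omega) (by omega)
  have h3 := hi 3 (by omega) (by omega)
  have hm : ((2 * n - 2 : ℕ) : R) = ((2 * n + 1 : ℕ) : R) - 3 := by
    rw [Nat.cast_sub (by omega)]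
    push_cast
    ring
  have h2 : (2 : R) ^ (2 * n - 2) = 2 * 2 ^ (2 * n - 2 - 1) := by
    rw [← pow_succ']
    congr 1
    omega
  rw [show 2 * n + 1 - 1 = 2 * n - 2 - 1 + 3 by omega, pow_add] at hq
  rw [hm, h2] at hc
  rw [Nat.cast_ofNat] at h3 hq
  generalize ∑ k ∈ range n, ((k + 1 : ℕ) : R) ^ (2 * n - 2 - 1) = T at *
  generalize ∑ k ∈ range (2 * n), ((k + 1 : ℕ) : R) ^ (2 * n - 2) = F at *
  generalize ∑ k ∈ range n, i (k + 1) ^ 3 = S at *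
  generalize (2 : R) ^ (2 * n - 2 - 1) = w at *
  generalize ((2 * n + 1 : ℕ) : R) = P at *
  have hE : (2 * w - 1) * (B + P * b) + w * (P - 3) * T = P * c := by
    refine mul_left_cancel₀ hP ?_
    linear_combination hc - (2 * w - 1) * hb
  refine ⟨i 3 * (2 * q * B + 8 * (2 * w - 1) * b + T + P * q * T - 3 * q * T - 8 * c) - t, ?_⟩
  linear_combination (-8 * i 3) * hE + i 3 * (2 * B + (P - 3) * T) * hq - ht - (T + 2 * B) * h3

/-! ### The ring of `p`-integral rationals -/

/-- The subring of rationals whose denominator is prime to `p`. -/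
def pIntegralRat (p : ℕ) (hp : p.Prime) : Subring ℚ where
  carrier := {x | ¬ p ∣ x.den}
  mul_mem' {a b} ha hb h := (hp.dvd_mul.1 (h.trans (Rat.mul_den_dvd a b))).elim ha hb
  one_mem' := by simpa using hp.one_lt.ne'
  add_mem' {a b} ha hb h := (hp.dvd_mul.1 (h.trans (Rat.add_den_dvd a b))).elim ha hb
  zero_mem' := by simpa using hp.one_lt.ne'
  neg_mem' {a} ha := by simpa using ha

variable {p : ℕ}

lemma mem_pIntegralRat {hp : p.Prime} {x : ℚ} : x ∈ pIntegralRat p hp ↔ ¬ p ∣ x.den := Iff.rfl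

lemma inv_natCast_mem_pIntegralRat (hp : p.Prime) {k : ℕ} (hk : ¬ p ∣ k) :
    (k : ℚ)⁻¹ ∈ pIntegralRat p hp := by
  have hk0 : 0 < k := Nat.pos_of_ne_zero fun h => hk (h ▸ dvd_zero p)
  rw [mem_pIntegralRat, Rat.inv_natCast_den_of_pos hk0]
  exact hk

lemma bernoulli'_mem_pIntegralRat (hp : p.Prime) {m : ℕ} (hm : m + 1 < p) :
    bernoulli' m ∈ pIntegralRat p hp := by
  induction m using Nat.strong_induction_on with
  | _ m ih =>
    rw [bernoulli'_def]
    refine sub_mem (one_mem _) (sum_mem fun k hk => ?_)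
    have hk := mem_range.1 hk
    refine mul_mem ?_ (ih k hk (by omega))
    rw [div_eq_mul_inv, show (m : ℚ) - k + 1 = ((m - k + 1 : ℕ) : ℚ) by
      push_cast [Nat.cast_sub hk.le]; rfl]
    exact mul_mem (natCast_mem _ _)
      (inv_natCast_mem_pIntegralRat hp (Nat.not_dvd_of_pos_of_lt (by omega) (by omega)))

lemma bernoulli_mem_pIntegralRat (hp : p.Prime) {m : ℕ} (hm : m + 1 < p) :
    bernoulli m ∈ pIntegralRat p hp :=
  mul_mem (pow_mem (neg_mem (one_mem _)) _) (bernoulli'_mem_pIntegralRat hp hm)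

/-- `∑_{k < p} k ^ m ≡ p B_m` modulo `p²` for `0 < m < p - 1`. -/
lemma exists_sum_pow_sub_mul_bernoulli (hp : p.Prime) {m : ℕ} (hm0 : 0 < m) (hm : m + 1 < p) :
    ∃ c ∈ pIntegralRat p hp,
      ∑ k ∈ range (p - 1), ((k + 1 : ℕ) : ℚ) ^ m - p * bernoulli m = p ^ 2 * c := by
  refine ⟨∑ j ∈ range m, bernoulli j * ((m + 1).choose j) * (p : ℚ) ^ (m - 1 - j) *
    ((m + 1 : ℕ) : ℚ)⁻¹, sum_mem fun j hj => ?_, ?_⟩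
  · have hj := mem_range.1 hj
    exact mul_mem (mul_mem (mul_mem (bernoulli_mem_pIntegralRat hp (by omega))
      (natCast_mem _ _)) (pow_mem (natCast_mem _ _) _))
      (inv_natCast_mem_pIntegralRat hp (Nat.not_dvd_of_pos_of_lt (by omega) hm))
  · have h := sum_range_pow p m
    have hp1 : range p = range (p - 1 + 1) := by rw [Nat.sub_add_cancel hp.one_le]
    rw [hp1, sum_range_succ', sum_range_succ] at h
    simp only [Nat.cast_zero, zero_pow hm0.ne', add_zero] at h
    have hm1 : (m : ℚ) + 1 ≠ 0 := by positivity
    rw [h, mul_sum, add_sub_assoc]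
    have hlast : bernoulli m * ((m + 1).choose m) * (p : ℚ) ^ (m + 1 - m) / (m + 1) -
        p * bernoulli m = 0 := by
      rw [Nat.choose_succ_self_right, Nat.add_sub_cancel_left]
      push_cast
      field_simp
      ring
    rw [hlast, add_zero]
    refine sum_congr rfl fun j hj => ?_
    have hj := mem_range.1 hj
    rw [show m + 1 - j = m - 1 - j + 2 by omega]
    push_cast
    ring

/-! ### The convolution of harmonic numbers -/

lemma sum_range_inv_mul_inv_reflect (N : ℕ) :
    ∑ k ∈ range N, ((k : ℚ) + 1)⁻¹ * ((N - k : ℕ) : ℚ)⁻¹ = 2 * harmonic N * ((N : ℚ) + 1)⁻¹ := by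
  have h : ∀ k ∈ range N, ((k : ℚ) + 1)⁻¹ * ((N - k : ℕ) : ℚ)⁻¹ =
      ((k : ℚ) + 1)⁻¹ * ((N : ℚ) + 1)⁻¹ + ((N - k : ℕ) : ℚ)⁻¹ * ((N : ℚ) + 1)⁻¹ := by
    intro k hk
    have hk := mem_range.1 hk
    have h1 : ((N - k : ℕ) : ℚ) ≠ 0 := by
      rw [Nat.cast_ne_zero]; omega
    have h2 : (N : ℚ) = (N - k : ℕ) + k := by
      rw [← Nat.cast_add, Nat.sub_add_cancel hk.le]
    rw [h2]
    have h3 : (k : ℚ) + 1 ≠ 0 := by positivity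
    have h4 : ((N - k : ℕ) : ℚ) + k + 1 ≠ 0 := by positivity
    field_simp
    ring
  have hr : ∑ k ∈ range N, ((N - k : ℕ) : ℚ)⁻¹ = harmonic N := by
    rw [harmonic, ← sum_range_reflect]
    refine sum_congr rfl fun k hk => ?_
    have hk := mem_range.1 hk
    rw [show N - (N - 1 - k) = k + 1 by omega]
  rw [sum_congr rfl h, sum_add_distrib, ← sum_mul, ← sum_mul, hr, harmonic]
  push_cast
  ring

/-- `∑_{k=1}^{N} H_{N+1-k} / k = H_{N+1}² - ∑_{k=1}^{N+1} 1/k²`. -/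
lemma sum_range_harmonic_div (N : ℕ) :
    ∑ k ∈ range N, harmonic (N - k) / ((k : ℚ) + 1) =
      harmonic (N + 1) ^ 2 - ∑ k ∈ range (N + 1), (((k : ℚ) + 1)⁻¹) ^ 2 := by
  induction N with
  | zero => simp
  | succ N ih =>
    have hstep : ∑ k ∈ range (N + 1), harmonic (N + 1 - k) / ((k : ℚ) + 1) =
        ∑ k ∈ range N, harmonic (N - k) / ((k : ℚ) + 1) +
        ∑ k ∈ range (N + 1), ((k : ℚ) + 1)⁻¹ * ((N + 1 - k : ℕ) : ℚ)⁻¹ := by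
      have h0 : ∑ k ∈ range N, harmonic (N - k) / ((k : ℚ) + 1) =
          ∑ k ∈ range (N + 1), harmonic (N - k) / ((k : ℚ) + 1) := by
        simp [sum_range_succ]
      rw [h0, ← sum_add_distrib]
      refine sum_congr rfl fun k hk => ?_
      have hk := mem_range.1 hk
      rw [show N + 1 - k = N - k + 1 by omega, harmonic_succ]
      ring
    rw [hstep, ih, sum_range_inv_mul_inv_reflect, harmonic_succ (N + 1),
      sum_range_succ _ (N + 1)]
    push_cast
    ring

theorem sum_H_half_sub_k_div_k (p : ℕ) (hp : p.Prime) (hp3 : 3 < p) :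
    ratCongr p 2
      (∑ k ∈ Finset.Icc 1 ((p - 1) / 2), harmonic ((p + 1) / 2 - k) / k)
      (-8 * fermatQ p + 4 * fermatQ p ^ 2 + 4 * p * fermatQ p ^ 2 + 8 * p * fermatQ p -
        4 * p * fermatQ p ^ 3 - (7 / 3) * p * bernoulli (p - 3)) := by
  obtain ⟨n, rfl⟩ : ∃ n, p = 2 * n + 1 := hp.odd_of_ne_two (by omega)
  have hn : 2 ≤ n := by omega
  set R := pIntegralRat (2 * n + 1) hp
  have hp0 : ((2 * n + 1 : ℕ) : ℚ) ≠ 0 := Nat.cast_ne_zero.2 (by omega)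
  have hP : ((2 * n + 1 : ℕ) : R) ≠ 0 := fun h => hp0 <| by
    simpa only [map_natCast, map_zero] using congrArg R.subtype h
  have hinv : ∀ k : ℕ, ¬ (2 * n + 1) ∣ k → ∃ x : R, (k : R) * x = 1 := fun k hk => by
    refine ⟨⟨_, inv_natCast_mem_pIntegralRat hp hk⟩, Subtype.ext ?_⟩
    have : (k : ℚ) ≠ 0 := Nat.cast_ne_zero.2 fun h => hk (h ▸ dvd_zero _)
    simpa using mul_inv_cancel₀ this
  have hi : ∀ k, 0 < k → k < 2 * n + 1 → ∃ x : R, (k : R) * x = 1 := fun k hk hkn =>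
    hinv k (Nat.not_dvd_of_pos_of_lt hk hkn)
  choose! i hi using hi
  have hicoe : ∀ k ∈ range n, (i (k + 1) : ℚ) = ((k : ℚ) + 1)⁻¹ := fun k hk => by
    have hk := mem_range.1 hk
    have := congrArg R.subtype (hi (k + 1) (by omega) (by omega))
    refine eq_inv_of_mul_eq_one_right ?_
    simpa using this
  have h2 : (2 : R) * i 2 = 1 := by simpa using hi 2 (by omega) (by omega)
  have h3 : (3 : R) * i 3 = 1 := by simpa using hi 3 (by omega) (by omega)
  obtain ⟨t, ht⟩ := hinv (2 * n + 1 + 1) fun h =>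
    hp.one_lt.ne' (Nat.dvd_one.1 ((Nat.dvd_add_right dvd_rfl).1 h))
  obtain ⟨q, hq⟩ := natCast_dvd_pow_card_sub_one_sub_one (R := R) (k := 2) hp
    (by omega) (by omega)
  have hqcoe : fermatQ (2 * n + 1) = q := by
    have := congrArg R.subtype hq
    simp only [map_sub, map_pow, map_mul, map_one, map_natCast, Subring.subtype_apply] at this
    rw [fermatQ, div_eq_iff hp0, mul_comm (q : ℚ), ← this, Nat.cast_ofNat]
  have hq4 : 1 + ((2 * n + 1 : ℕ) : R) * q = 4 ^ n := by
    rw [← hq, Nat.add_sub_cancel, pow_mul]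
    norm_num
  obtain ⟨b, hbR, hb⟩ := exists_sum_pow_sub_mul_bernoulli hp (m := 2 * n - 2)
    (by omega) (by omega)
  obtain ⟨B, hB⟩ : ∃ B : R, (B : ℚ) = bernoulli (2 * n - 2) :=
    ⟨⟨_, bernoulli_mem_pIntegralRat hp (by omega)⟩, rfl⟩
  have hcube := natCast_dvd_half_inv_cube_sum (B := B) hp hn hi hP
    ⟨⟨b, hbR⟩, R.subtype_injective <| by
      simpa only [map_sub, map_sum, map_pow, map_mul, map_natCast, Subring.subtype_apply, hB,
        Nat.add_sub_cancel] using hb⟩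
  obtain ⟨c, hc⟩ := hcube
  obtain ⟨a, ha⟩ := sq_dvd_half_inv_sq_sum hi h2
  have hA : ∑ k ∈ range n, i (k + 1) ^ 2 = 7 * i 3 * ((2 * n + 1 : ℕ) : R) * B +
      ((2 * n + 1 : ℕ) : R) ^ 2 * (i 2 * i 3 * (a - 7 * c)) := by
    linear_combination i 2 * i 3 * ha - 7 * i 2 * i 3 * ((2 * n + 1 : ℕ) : R) * hc
      + (7 * i 3 * ((2 * n + 1 : ℕ) : R) * B - 3 * i 3 * ∑ k ∈ range n, i (k + 1) ^ 2) * h2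
      - (∑ k ∈ range n, i (k + 1) ^ 2) * h3
  obtain ⟨d, hd⟩ := sq_dvd_half_harmonic_sub hi h2 hP hq4
    ⟨7 * i 3 * B + ((2 * n + 1 : ℕ) : R) * (i 2 * i 3 * (a - 7 * c)), by rw [hA]; ring⟩
  have hmain : ((2 * n + 1 : ℕ) : R) ^ 2 ∣ (∑ k ∈ range n, i (k + 1)) ^ 2 +
      4 * t * ∑ k ∈ range n, i (k + 1) - ∑ k ∈ range n, i (k + 1) ^ 2 -
      (-8 * q + 4 * q ^ 2 + 4 * ((2 * n + 1 : ℕ) : R) * q ^ 2 + 8 * ((2 * n + 1 : ℕ) : R) * q -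
        4 * ((2 * n + 1 : ℕ) : R) * q ^ 3 - 7 * i 3 * ((2 * n + 1 : ℕ) : R) * B) := by
    rw [hA]
    rw [sub_eq_iff_eq_add'] at hd
    rw [hd]
    rw [Nat.cast_succ] at ht
    generalize ((2 * n + 1 : ℕ) : R) = P at *
    have ht' : t = 1 - P + P ^ 2 * t := by linear_combination (1 - P) * ht
    refine ⟨q ^ 4 + 2 * d * (-2 * q + P * q ^ 2) + P ^ 2 * d ^ 2 +
      4 * t * (-2 * q + P * q ^ 2 + P ^ 2 * d) + 4 * (1 - P) * d - 4 * q ^ 2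
      - i 2 * i 3 * (a - 7 * c), ?_⟩
    linear_combination 4 * (-2 * q + P * q ^ 2 + P ^ 2 * d) * ht'
  obtain ⟨e, he⟩ := hmain
  refine ⟨e, ?_, e.2⟩
  have hS : ∑ k ∈ Finset.Icc 1 ((2 * n + 1 - 1) / 2),
      harmonic ((2 * n + 1 + 1) / 2 - k) / (k : ℚ) =
      ∑ k ∈ range n, harmonic (n - k) / ((k : ℚ) + 1) := by
    rw [show (2 * n + 1 - 1) / 2 = n by omega, show (2 * n + 1 + 1) / 2 = n + 1 by omega,
      ← Ico_add_one_right_eq_Icc, sum_Ico_eq_sum_range, Nat.add_sub_cancel]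
    refine sum_congr rfl fun k _ => ?_
    rw [add_comm 1 k, Nat.add_sub_add_right, Nat.cast_succ]
  have h3coe : (i 3 : ℚ) = 1 / 3 := by
    have := congrArg R.subtype h3
    simp only [map_mul, map_one, map_ofNat, Subring.subtype_apply] at this
    linarith
  have htcoe : (t : ℚ) * (2 * n + 2) = 1 := by
    have := congrArg R.subtype ht
    simp only [map_mul, map_one, map_natCast, Subring.subtype_apply] at this
    push_cast at this
    linarith
  have hinvn : ((n : ℚ) + 1)⁻¹ = 2 * t := by
    refine inv_eq_of_mul_eq_one_right ?_
    linarith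
  have hH : harmonic n = ∑ k ∈ range n, (i (k + 1) : ℚ) := by
    rw [harmonic, sum_congr rfl hicoe]
    push_cast
    rfl
  have hA2 : ∑ k ∈ range n, (((k : ℚ) + 1)⁻¹) ^ 2 = ∑ k ∈ range n, (i (k + 1) : ℚ) ^ 2 :=
    sum_congr rfl fun k hk => by rw [hicoe k hk]
  have he := congrArg R.subtype he
  rw [hS, sum_range_harmonic_div, harmonic_succ, sum_range_succ, hA2, hH, hqcoe,
    show 2 * n + 1 - 3 = 2 * n - 2 by omega, ← hB]
  simp only [map_add, map_sub, map_mul, map_pow, map_neg, map_sum, map_natCast, map_ofNat,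
    Subring.subtype_apply, h3coe] at he
  push_cast at he ⊢
  rw [hinvn]
  linear_combination he
end

section
/- Let p > 3 be a prime. Then ∑_{k=1}^{(p-1)/2} H_{p+1-2k}/k ≡ q_p(2)^2 - 4·q_p(2) + 4p·q_p(2) + 2p·q_p(2)^2 - p·q_p(2)^3 - (13/8)·p·B_{p-3} modulo p^2 (as rational numbers). -/
open Finset

/-- The ring of rationals whose denominator is prime to `p`. -/
def integralAt (p : ℕ) [hp : Fact p.Prime] : Subring ℚ where
  carrier := {x | ¬ p ∣ x.den}
  mul_mem' {a b} ha hb h :=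
    (hp.out.dvd_mul.1 (h.trans (Rat.mul_den_dvd a b))).elim ha hb
  one_mem' := by simpa using hp.out.ne_one
  add_mem' {a b} ha hb h :=
    (hp.out.dvd_mul.1 (h.trans (Rat.add_den_dvd a b))).elim ha hb
  zero_mem' := by simpa using hp.out.ne_one
  neg_mem' := by simp

/-- The additive group `p ^ r * integralAt p`. -/
def powMultiples (p r : ℕ) [Fact p.Prime] : AddSubgroup ℚ :=
  (integralAt p).toAddSubgroup.map (AddMonoidHom.mulRight ((p : ℚ) ^ r))

/-- The sum of the reciprocals of the `r`-th powers of `1, …, n`. -/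
def powHarmonic (r n : ℕ) : ℚ := ∑ i ∈ range n, 1 / ((i : ℚ) + 1) ^ r

/-- The product of the factors `1 - t / j` for `1 ≤ j ≤ n`. -/
def prodOneSubDiv (t : ℚ) (n : ℕ) : ℚ := ∏ j ∈ range n, (1 - t / ((j : ℚ) + 1))

/-- `1 - t e₁ + t² e₂ - t³ e₃` written in terms of power sums. -/
def expansion (t h₁ h₂ h₃ : ℚ) : ℚ :=
  1 - t * h₁ + t ^ 2 * ((h₁ ^ 2 - h₂) / 2) - t ^ 3 * ((h₁ ^ 3 - 3 * h₁ * h₂ + 2 * h₃) / 6)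

section Exact

lemma powHarmonic_zero (r : ℕ) : powHarmonic r 0 = 0 := rfl

lemma powHarmonic_succ (r n : ℕ) :
    powHarmonic r (n + 1) = powHarmonic r n + 1 / ((n : ℚ) + 1) ^ r :=
  sum_range_succ _ _

lemma harmonic_eq_powHarmonic (n : ℕ) : harmonic n = powHarmonic 1 n := by
  simp [harmonic, powHarmonic]

lemma prodOneSubDiv_succ (t : ℚ) (n : ℕ) :
    prodOneSubDiv t (n + 1) = prodOneSubDiv t n * (1 - t / ((n : ℚ) + 1)) :=
  prod_range_succ _ _

lemma sum_range_two_mul {M : Type*} [AddCommMonoid M] (f : ℕ → M) (n : ℕ) :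
    ∑ i ∈ range (2 * n), f i = ∑ i ∈ range n, (f (2 * i) + f (2 * i + 1)) := by
  induction n with
  | zero => simp
  | succ n ih =>
    rw [mul_add, mul_one, sum_range_succ, sum_range_succ, ih, sum_range_succ, add_assoc]

/-- Pairing `i` with `2n + 1 - i` in a sum over `1, …, 2n`. -/
lemma sum_range_two_mul_pair {M : Type*} [AddCommMonoid M] (f : ℕ → M) (n : ℕ) :
    ∑ i ∈ range (2 * n), f (i + 1) =
      ∑ i ∈ range n, (f (i + 1) + f (2 * n + 1 - (i + 1))) := by
  rw [two_mul, sum_range_add, sum_add_distrib]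
  congr 1
  rw [← sum_range_reflect]
  refine sum_congr rfl fun i hi => ?_
  have := mem_range.1 hi
  congr 1
  omega

/-- Pairing `2i` with `2n + 1 - 2i` in a sum over `1, …, 2n`. -/
lemma sum_range_two_mul_pair_even {M : Type*} [AddCommMonoid M] (f : ℕ → M) (n : ℕ) :
    ∑ i ∈ range (2 * n), f (i + 1) =
      ∑ i ∈ range n, (f (2 * (i + 1)) + f (2 * n + 1 - 2 * (i + 1))) := by
  rw [sum_range_two_mul, sum_add_distrib, sum_add_distrib, add_comm]
  congr 1
  rw [← sum_range_reflect]
  refine sum_congr rfl fun i hi => ?_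
  have := mem_range.1 hi
  congr 1
  omega

/-- The two ways of pairing the factors of a product over `1, …, 2n`. -/
lemma prod_range_pair_eq_prod_range_pair_even {M : Type*} [CommMonoid M] (f : ℕ → M) (n : ℕ) :
    ∏ i ∈ range n, (f (2 * (i + 1)) * f (2 * n + 1 - 2 * (i + 1))) =
      ∏ i ∈ range n, (f (i + 1) * f (2 * n + 1 - (i + 1))) :=
  (sum_range_two_mul_pair_even (M := Additive M) f n).symm.trans
    (sum_range_two_mul_pair (M := Additive M) f n)

lemma sum_one_add_neg_one_pow_mul (f : ℕ → ℚ) (n : ℕ) :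
    ∑ i ∈ range (2 * n), (1 + (-1) ^ (i + 1)) * f i = 2 * ∑ i ∈ range n, f (2 * i + 1) := by
  rw [sum_range_two_mul, mul_sum]
  refine sum_congr rfl fun i _ => ?_
  simp only [pow_succ, pow_mul]
  norm_num

lemma natCast_choose_eq (N k : ℕ) (hk : k ≤ N) :
    (N.choose k : ℚ) = (-1) ^ k * prodOneSubDiv (N + 1 : ℕ) k := by
  induction k with
  | zero => simp [prodOneSubDiv]
  | succ k ih =>
    have h := Nat.choose_succ_right_eq N k
    have h' : (N.choose (k + 1) : ℚ) * (k + 1) = N.choose k * (N - k) := by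
      rw [← Nat.cast_sub (by omega)]
      exact_mod_cast h
    rw [prodOneSubDiv_succ, eq_div_of_mul_eq (by positivity) h', ih (by omega)]
    have : (k : ℚ) + 1 ≠ 0 := by positivity
    push_cast
    field_simp
    ring

lemma natCast_choose_add (m k : ℕ) : ((m + k).choose k : ℚ) = prodOneSubDiv (-m) k := by
  induction k with
  | zero => simp [prodOneSubDiv]
  | succ k ih =>
    have h := Nat.add_one_mul_choose_eq (m + k) k
    have h' : ((m + (k + 1)).choose (k + 1) : ℚ) * (k + 1) = (m + k + 1) * (m + k).choose k := by
      exact_mod_cast h.symm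
    rw [prodOneSubDiv_succ, eq_div_of_mul_eq (by positivity) h', ih]
    have : (k : ℚ) + 1 ≠ 0 := by positivity
    field_simp
    ring

lemma sum_choose_succ (t N : ℕ) (hN : N ≤ t + 1) :
    ∑ k ∈ range N, ((t + 1).choose (k + 1) : ℚ) =
      (t + 1 : ℕ) * ∑ k ∈ range N, (-1) ^ k / ((k : ℚ) + 1) * prodOneSubDiv (t + 1 : ℕ) k := by
  rw [mul_sum]
  refine sum_congr rfl fun k hk => ?_
  have h := Nat.add_one_mul_choose_eq t k
  have h' : ((t + 1).choose (k + 1) : ℚ) * (k + 1) = (t + 1 : ℕ) * t.choose k := by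
    exact_mod_cast h.symm
  rw [eq_div_of_mul_eq (by positivity) h',
    natCast_choose_eq t k (by have := mem_range.1 hk; omega)]
  ring

/-- `∑_{k=1}^{p-1} C(p, k) = 2^p - 2`. -/
lemma sum_choose_self (N : ℕ) :
    ∑ k ∈ range N, ((N + 1).choose (k + 1) : ℚ) = 2 * 2 ^ N - 2 := by
  have h := Nat.sum_range_choose (N + 1)
  rw [sum_range_succ, sum_range_succ'] at h
  have h' : ∑ k ∈ range N, ((N + 1).choose (k + 1) : ℚ) + 1 + 1 = 2 ^ (N + 1) := by
    have := congrArg (Nat.cast : ℕ → ℚ) h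
    push_cast at this
    simpa using this
  rw [pow_succ] at h'
  linear_combination h'

lemma sum_choose_two_mul (N : ℕ) :
    ∑ k ∈ range N, ((2 * (N + 1)).choose (k + 1) : ℚ) =
      2 * 4 ^ N - 1 - prodOneSubDiv (-(N + 1 : ℕ)) N := by
  have h := Nat.sum_range_choose_halfway N
  have e : ∀ k, (2 * (N + 1)).choose (k + 1) = (2 * N + 1).choose k + (2 * N + 1).choose (k + 1) :=
    fun k => Nat.choose_succ_succ _ _
  have h1 := h
  rw [sum_range_succ'] at h1
  rw [sum_range_succ] at h
  have hc : (2 * N + 1).choose N = (N + 1 + N).choose N := by congr 1; ring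
  have h' : ∑ k ∈ range N, ((2 * N + 1).choose k : ℚ) + (N + 1 + N).choose N = 4 ^ N := by
    rw [← hc]; exact_mod_cast h
  have h1' : ∑ k ∈ range N, ((2 * N + 1).choose (k + 1) : ℚ) + 1 = 4 ^ N := by
    have := congrArg (Nat.cast : ℕ → ℚ) h1
    push_cast at this
    simpa using this
  rw [natCast_choose_add] at h'
  simp only [e, Nat.cast_add, sum_add_distrib]
  push_cast at h' ⊢
  linear_combination h' + h1'

/-- `2^{2n} ∏_{i ≤ n} (1 - p / (2i)) = ∏_{i ≤ n} (1 - p / i)` for `p = 2n + 1`. -/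
lemma two_pow_mul_prodOneSubDiv (n : ℕ) :
    2 ^ (2 * n) * prodOneSubDiv ((2 * n + 1 : ℕ) / 2) n = prodOneSubDiv (2 * n + 1 : ℕ) n := by
  have h := prod_range_pair_eq_prod_range_pair_even (fun i : ℕ => (i : ℚ)) n
  have e₁ : ∀ i ∈ range n, ((2 * (i + 1) : ℕ) : ℚ) * ((2 * n + 1 - 2 * (i + 1) : ℕ) : ℚ) =
      -((i + 1) ^ 2) * (2 ^ 2 * (1 - (2 * n + 1 : ℕ) / 2 / ((i : ℚ) + 1))) := fun i hi => by
    have := mem_range.1 hi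
    rw [Nat.cast_sub (by omega)]
    have : (i : ℚ) + 1 ≠ 0 := by positivity
    push_cast
    field_simp
    ring
  have e₂ : ∀ i ∈ range n, ((i + 1 : ℕ) : ℚ) * ((2 * n + 1 - (i + 1) : ℕ) : ℚ) =
      -((i + 1) ^ 2) * (1 - (2 * n + 1 : ℕ) / ((i : ℚ) + 1)) := fun i hi => by
    have := mem_range.1 hi
    rw [Nat.cast_sub (by omega)]
    have : (i : ℚ) + 1 ≠ 0 := by positivity
    push_cast
    field_simp
    ring
  rw [prod_congr rfl e₁, prod_congr rfl e₂] at h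
  simp only [prod_mul_distrib] at h
  have h0 : ∏ i ∈ range n, (-(((i : ℚ) + 1) ^ 2)) ≠ 0 :=
    prod_ne_zero_iff.2 fun i _ => neg_ne_zero.2 (by positivity)
  have h1 := mul_left_cancel₀ h0 h
  rwa [prod_const, card_range, ← pow_mul] at h1

/-- `∑_{k=1}^N (-1)^k C(N, k) / k = -H_N`. -/
lemma sum_neg_one_pow_choose_div (N : ℕ) :
    ∑ k ∈ range N, (-1) ^ (k + 1) * (N.choose (k + 1) : ℚ) / ((k : ℚ) + 1) =
      -powHarmonic 1 N := by
  induction N with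
  | zero => simp [powHarmonic]
  | succ N ih =>
    have key : ∑ k ∈ range (N + 1), (-1) ^ (k + 1) * ((N + 1).choose (k + 1) : ℚ) = -1 := by
      have h := Int.alternating_sum_range_choose_of_ne (n := N + 1) (by omega)
      rw [sum_range_succ'] at h
      have := congrArg (Int.cast : ℤ → ℚ) h
      push_cast at this
      simp at this
      linear_combination this
    have e : ∀ k ∈ range (N + 1),
        (-1) ^ (k + 1) * ((N + 1).choose (k + 1) : ℚ) / ((k : ℚ) + 1) =
        (-1) ^ (k + 1) * (N.choose (k + 1) : ℚ) / ((k : ℚ) + 1) +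
          1 / ((N : ℚ) + 1) * ((-1) ^ (k + 1) * ((N + 1).choose (k + 1) : ℚ)) := fun k _ => by
      have h := Nat.add_one_mul_choose_eq N k
      have h' : ((N + 1).choose (k + 1) : ℚ) * (k + 1) = (N + 1) * N.choose k := by
        exact_mod_cast h.symm
      have h'' : ((N + 1).choose (k + 1) : ℚ) = N.choose k + N.choose (k + 1) := by
        exact_mod_cast Nat.choose_succ_succ N k
      have : (k : ℚ) + 1 ≠ 0 := by positivity
      have : (N : ℚ) + 1 ≠ 0 := by positivity
      field_simp
      linear_combination (N + 1) * h'' - h'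
    rw [sum_congr rfl e, sum_add_distrib, ← mul_sum, key, sum_range_succ, ih, powHarmonic_succ]
    simp
    ring

lemma sum_prodOneSubDiv_div (N : ℕ) :
    ∑ k ∈ range N, prodOneSubDiv (N + 1 : ℕ) (k + 1) / ((k : ℚ) + 1) = -powHarmonic 1 N := by
  rw [← sum_neg_one_pow_choose_div]
  refine sum_congr rfl fun k hk => ?_
  rw [natCast_choose_eq N (k + 1) (by have := mem_range.1 hk; omega), ← mul_assoc, ← mul_pow]
  simp

lemma sum_powHarmonic_one_div (N : ℕ) :
    ∑ k ∈ range N, powHarmonic 1 k / ((k : ℚ) + 1) =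
      (powHarmonic 1 N ^ 2 - powHarmonic 2 N) / 2 := by
  induction N with
  | zero => simp [powHarmonic]
  | succ N ih =>
    rw [sum_range_succ, ih, powHarmonic_succ, powHarmonic_succ]
    have : (N : ℚ) + 1 ≠ 0 := by positivity
    field_simp
    ring

lemma sum_powHarmonic_succ_one_div (N : ℕ) :
    ∑ k ∈ range N, powHarmonic 1 (k + 1) / ((k : ℚ) + 1) =
      (powHarmonic 1 N ^ 2 + powHarmonic 2 N) / 2 := by
  induction N with
  | zero => simp [powHarmonic]
  | succ N ih =>
    rw [sum_range_succ, ih, powHarmonic_succ, powHarmonic_succ]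
    have : (N : ℚ) + 1 ≠ 0 := by positivity
    field_simp
    ring

lemma sum_sq_sub_div (N : ℕ) :
    ∑ k ∈ range N, (powHarmonic 1 (k + 1) ^ 2 - powHarmonic 2 (k + 1)) / ((k : ℚ) + 1) =
      (powHarmonic 1 N ^ 3 + 3 * powHarmonic 1 N * powHarmonic 2 N - 4 * powHarmonic 3 N) / 3 -
        2 * ∑ k ∈ range N, powHarmonic 2 k / ((k : ℚ) + 1) := by
  induction N with
  | zero => simp [powHarmonic]
  | succ N ih =>
    rw [sum_range_succ, ih, sum_range_succ]
    simp only [powHarmonic_succ]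
    have : (N : ℚ) + 1 ≠ 0 := by positivity
    field_simp
    ring

lemma sum_inv_odd_mul (n : ℕ) :
    ∑ k ∈ range n, 1 / ((2 * (k : ℚ) + 1) * (k + 1)) =
      2 * powHarmonic 1 (2 * n) - 2 * powHarmonic 1 n := by
  induction n with
  | zero => simp [powHarmonic]
  | succ n ih =>
    rw [sum_range_succ, ih, show 2 * (n + 1) = 2 * n + 1 + 1 by ring]
    simp only [powHarmonic_succ]
    have : (n : ℚ) + 1 ≠ 0 := by positivity
    have : 2 * (n : ℚ) + 1 ≠ 0 := by positivity
    have : 2 * (n : ℚ) + 1 + 1 ≠ 0 := by positivity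
    push_cast
    field_simp
    ring

lemma sum_inv_odd_sq_mul (n : ℕ) :
    ∑ k ∈ range n, 1 / ((2 * (k : ℚ) + 1) ^ 2 * (k + 1)) =
      2 * powHarmonic 2 (2 * n) - powHarmonic 2 n / 2 - 2 * powHarmonic 1 (2 * n) +
        2 * powHarmonic 1 n := by
  induction n with
  | zero => simp [powHarmonic]
  | succ n ih =>
    rw [sum_range_succ, ih, show 2 * (n + 1) = 2 * n + 1 + 1 by ring]
    simp only [powHarmonic_succ]
    have : (n : ℚ) + 1 ≠ 0 := by positivity
    have : 2 * (n : ℚ) + 1 ≠ 0 := by positivity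
    have : 2 * (n : ℚ) + 1 + 1 ≠ 0 := by positivity
    push_cast
    field_simp
    ring

lemma sum_powHarmonic_two_mul_div (r n : ℕ) :
    ∑ k ∈ range n, powHarmonic r (2 * k) / ((k : ℚ) + 1) =
      ∑ k ∈ range (2 * n), powHarmonic r k / ((k : ℚ) + 1) +
      ∑ k ∈ range (2 * n), (-1) ^ (k + 1) * powHarmonic r k / ((k : ℚ) + 1) -
      ∑ k ∈ range n, 1 / ((2 * (k : ℚ) + 1) ^ r * (k + 1)) := by
  have h := sum_one_add_neg_one_pow_mul (fun k => powHarmonic r k / ((k : ℚ) + 1)) n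
  have h' : ∑ k ∈ range (2 * n), powHarmonic r k / ((k : ℚ) + 1) +
      ∑ k ∈ range (2 * n), (-1) ^ (k + 1) * powHarmonic r k / ((k : ℚ) + 1) =
      2 * ∑ k ∈ range n, powHarmonic r (2 * k + 1) / (((2 * k + 1 : ℕ) : ℚ) + 1) := by
    rw [← h, ← sum_add_distrib]
    exact sum_congr rfl fun k _ => by ring
  rw [h', mul_sum, ← sum_sub_distrib]
  refine sum_congr rfl fun k _ => ?_
  rw [powHarmonic_succ]
  have : (k : ℚ) + 1 ≠ 0 := by positivity
  have : 2 * (k : ℚ) + 1 ≠ 0 := by positivity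
  have : 2 * (k : ℚ) + 1 + 1 ≠ 0 := by positivity
  push_cast
  field_simp
  ring

/-- Alternating power sums over `1, …, 2n`. -/
lemma sum_neg_one_pow_div (r n : ℕ) :
    ∑ k ∈ range (2 * n), (-1) ^ (k + 1) / ((k : ℚ) + 1) ^ r =
      2 / 2 ^ r * powHarmonic r n - powHarmonic r (2 * n) := by
  have h := sum_one_add_neg_one_pow_mul (fun k => 1 / ((k : ℚ) + 1) ^ r) n
  simp only [mul_one_div, add_div, sum_add_distrib] at h
  rw [powHarmonic, powHarmonic, eq_sub_iff_add_eq'.2 h, mul_sum, mul_sum]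
  congr 1
  refine sum_congr rfl fun k _ => ?_
  have e : (((2 * k + 1 : ℕ) : ℚ) + 1) = 2 * (k + 1) := by push_cast; ring
  rw [e, mul_pow]
  have : (k : ℚ) + 1 ≠ 0 := by positivity
  field_simp

lemma powHarmonic_pair (r n : ℕ) :
    powHarmonic r (2 * n) = ∑ i ∈ range n,
      (1 / ((i + 1 : ℕ) : ℚ) ^ r + 1 / (((2 * n + 1 : ℕ) : ℚ) - (i + 1 : ℕ)) ^ r) := by
  have h := sum_range_two_mul_pair (fun i : ℕ => 1 / (i : ℚ) ^ r) n
  simp only [powHarmonic, ← Nat.cast_add_one]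
  rw [h]
  refine sum_congr rfl fun i hi => ?_
  rw [Nat.cast_sub (by have := mem_range.1 hi; omega)]

lemma powHarmonic_pair_even (r n : ℕ) :
    powHarmonic r (2 * n) = ∑ i ∈ range n, (1 / ((2 * (i + 1) : ℕ) : ℚ) ^ r +
      1 / (((2 * n + 1 : ℕ) : ℚ) - (2 * (i + 1) : ℕ)) ^ r) := by
  have h := sum_range_two_mul_pair_even (fun i : ℕ => 1 / (i : ℚ) ^ r) n
  simp only [powHarmonic, ← Nat.cast_add_one]
  rw [h]
  refine sum_congr rfl fun i hi => ?_
  rw [Nat.cast_sub (by have := mem_range.1 hi; omega)]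

end Exact

section Integrality

variable {p : ℕ} [hp : Fact p.Prime] {r s : ℕ} {x y : ℚ}

lemma mem_powMultiples : x ∈ powMultiples p r ↔ ∃ c ∈ integralAt p, c * (p : ℚ) ^ r = x :=
  Iff.rfl

lemma mem_powMultiples_zero : x ∈ powMultiples p 0 ↔ x ∈ integralAt p := by
  simp [mem_powMultiples]

lemma pow_mul_mem_powMultiples (r : ℕ) (hx : x ∈ integralAt p) :
    (p : ℚ) ^ r * x ∈ powMultiples p r :=
  ⟨x, hx, mul_comm _ _⟩

lemma mul_mem_powMultiples (hx : x ∈ powMultiples p r) (hy : y ∈ powMultiples p s) :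
    x * y ∈ powMultiples p (r + s) := by
  obtain ⟨c, hc, rfl⟩ := mem_powMultiples.1 hx
  obtain ⟨d, hd, rfl⟩ := mem_powMultiples.1 hy
  exact mem_powMultiples.2 ⟨c * d, mul_mem hc hd, by ring⟩

lemma smul_mem_powMultiples (hx : x ∈ integralAt p) (hy : y ∈ powMultiples p r) :
    x * y ∈ powMultiples p r := by
  simpa using mul_mem_powMultiples (mem_powMultiples_zero.2 hx) hy

lemma powMultiples_mono (h : r ≤ s) (hx : x ∈ powMultiples p s) : x ∈ powMultiples p r := by
  obtain ⟨c, hc, rfl⟩ := mem_powMultiples.1 hx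
  refine mem_powMultiples.2 ⟨c * p ^ (s - r), mul_mem hc (pow_mem (natCast_mem _ p) _), ?_⟩
  rw [mul_assoc, ← pow_add, Nat.sub_add_cancel h]

lemma mem_integralAt_of_mem_powMultiples (hx : x ∈ powMultiples p r) : x ∈ integralAt p :=
  mem_powMultiples_zero.1 (powMultiples_mono (Nat.zero_le r) hx)

lemma mem_powMultiples_of_pow_mul (h : (p : ℚ) ^ s * x ∈ powMultiples p (r + s)) :
    x ∈ powMultiples p r := by
  obtain ⟨c, hc, h⟩ := mem_powMultiples.1 h
  have : (p : ℚ) ^ s ≠ 0 := pow_ne_zero _ (Nat.cast_ne_zero.2 hp.out.ne_zero)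
  refine mem_powMultiples.2 ⟨c, hc, mul_left_cancel₀ this ?_⟩
  rw [← h, pow_add]
  ring

lemma inv_natCast_mem_integralAt {m : ℕ} (hm : ¬ p ∣ m) : ((m : ℚ))⁻¹ ∈ integralAt p := by
  have hm0 : 0 < m := Nat.pos_of_ne_zero fun h => hm (h ▸ dvd_zero p)
  change ¬ p ∣ ((m : ℚ))⁻¹.den
  rwa [Rat.inv_natCast_den_of_pos hm0]

lemma one_div_natCast_mem_integralAt {m : ℕ} (hm0 : 0 < m) (hm : m < p) :
    1 / (m : ℚ) ∈ integralAt p := by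
  rw [one_div]
  exact inv_natCast_mem_integralAt (Nat.not_dvd_of_pos_of_lt hm0 hm)

lemma one_div_add_one_mem_integralAt {m : ℕ} (hm : m + 1 < p) :
    1 / ((m : ℚ) + 1) ∈ integralAt p := by
  simpa using one_div_natCast_mem_integralAt (Nat.succ_pos m) hm

lemma half_mem_integralAt (hp3 : 3 < p) : (1 / 2 : ℚ) ∈ integralAt p := by
  simpa using one_div_natCast_mem_integralAt (p := p) (m := 2) (by norm_num) (by omega)

lemma third_mem_integralAt (hp3 : 3 < p) : (1 / 3 : ℚ) ∈ integralAt p := by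
  simpa using one_div_natCast_mem_integralAt (p := p) (m := 3) (by norm_num) (by omega)

lemma powHarmonic_mem_integralAt (r : ℕ) {m : ℕ} (hm : m < p) :
    powHarmonic r m ∈ integralAt p := by
  refine sum_mem fun i hi => ?_
  rw [← one_div_pow]
  exact pow_mem (one_div_add_one_mem_integralAt (by have := mem_range.1 hi; omega)) _

/-- The expansion of `∏ (1 - t / j)` modulo `p ^ 4` for `t` divisible by `p`. -/
lemma prodOneSubDiv_sub_expansion_mem (hp3 : 3 < p) {t : ℚ} (ht : t ∈ powMultiples p 1) {k : ℕ}
    (hk : k < p) :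
    prodOneSubDiv t k - expansion t (powHarmonic 1 k) (powHarmonic 2 k) (powHarmonic 3 k) ∈
      powMultiples p 4 := by
  induction k with
  | zero => simp [prodOneSubDiv, expansion, powHarmonic]
  | succ k ih =>
    have ih := ih (by omega)
    have hu := one_div_add_one_mem_integralAt hk
    have ht' := mem_integralAt_of_mem_powMultiples ht
    have h1 := powHarmonic_mem_integralAt (p := p) 1 (m := k) (by omega)
    have h2 := powHarmonic_mem_integralAt (p := p) 2 (m := k) (by omega)
    have h3 := powHarmonic_mem_integralAt (p := p) 3 (m := k) (by omega)
    have hh := half_mem_integralAt hp3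
    have ht3 := third_mem_integralAt hp3
    simp only [powHarmonic_succ, prodOneSubDiv_succ, ← one_div_pow]
    rw [div_eq_mul_one_div t]
    set u := 1 / ((k : ℚ) + 1)
    set a := powHarmonic 1 k
    set b := powHarmonic 2 k
    set c := powHarmonic 3 k
    have hA : 1 - t * u ∈ integralAt p := sub_mem (one_mem _) (mul_mem ht' hu)
    have hB : u * ((a ^ 3 - 3 * a * b + 2 * c) * ((1 / 2) * (1 / 3))) ∈ integralAt p := by
      aesop
    have ht4 : t ^ 4 ∈ powMultiples p 4 := by
      rw [show t ^ 4 = t * t * t * t by ring]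
      exact mul_mem_powMultiples (mul_mem_powMultiples (mul_mem_powMultiples ht ht) ht) ht
    have := add_mem (smul_mem_powMultiples hA ih) (smul_mem_powMultiples hB ht4)
    convert this using 1
    simp only [expansion]
    ring

end Integrality

section Reflection

lemma one_div_sub_natCast {p i : ℕ} (hi0 : 0 < i) (hi : i < p) :
    1 / ((p : ℚ) - i) = -(1 / (i : ℚ)) + p * (1 / (i : ℚ)) * (1 / ((p : ℚ) - i)) := by
  have h1 : (i : ℚ) ≠ 0 := by positivity
  have h2 : (p : ℚ) - i ≠ 0 := sub_ne_zero.2 (by exact_mod_cast hi.ne')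
  field_simp
  ring

variable {p n : ℕ} [hp : Fact p.Prime]

lemma one_div_sub_natCast_mem {i : ℕ} (hi0 : 0 < i) (hi : i < p) :
    1 / ((p : ℚ) - i) ∈ integralAt p := by
  rw [← Nat.cast_sub hi.le]
  exact one_div_natCast_mem_integralAt (by omega) (by omega)

lemma one_div_sub_natCast_add_mem {i : ℕ} (hi0 : 0 < i) (hi : i < p) :
    1 / ((p : ℚ) - i) + 1 / i + p * (1 / (i : ℚ) ^ 2) + p ^ 2 * (1 / (i : ℚ) ^ 3) ∈
      powMultiples p 3 := by
  have h := one_div_sub_natCast hi0 hi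
  have hu := one_div_natCast_mem_integralAt hi0 hi
  have hv := one_div_sub_natCast_mem hi0 hi
  simp only [← one_div_pow]
  set u := 1 / (i : ℚ)
  set v := 1 / ((p : ℚ) - i)
  clear_value u v
  refine mem_powMultiples.2 ⟨u ^ 3 * v, by clear h; aesop, ?_⟩
  linear_combination -(1 + p * u + p ^ 2 * u ^ 2) * h

lemma one_div_sub_natCast_add_mem_one {i : ℕ} (hi0 : 0 < i) (hi : i < p) :
    1 / ((p : ℚ) - i) + 1 / i ∈ powMultiples p 1 := by
  have h := one_div_sub_natCast hi0 hi
  have hu := one_div_natCast_mem_integralAt hi0 hi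
  have hv := one_div_sub_natCast_mem hi0 hi
  set u := 1 / (i : ℚ)
  set v := 1 / ((p : ℚ) - i)
  clear_value u v
  refine mem_powMultiples.2 ⟨u * v, by clear h; aesop, ?_⟩
  linear_combination -h

lemma one_div_sub_natCast_sq_sub_mem {i : ℕ} (hi0 : 0 < i) (hi : i < p) :
    1 / ((p : ℚ) - i) ^ 2 - 1 / (i : ℚ) ^ 2 - 2 * p * (1 / (i : ℚ) ^ 3) ∈ powMultiples p 2 := by
  have h := one_div_sub_natCast hi0 hi
  have hu := one_div_natCast_mem_integralAt hi0 hi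
  have hv := one_div_sub_natCast_mem hi0 hi
  simp only [← one_div_pow]
  set u := 1 / (i : ℚ)
  set v := 1 / ((p : ℚ) - i)
  clear_value u v
  refine mem_powMultiples.2 ⟨u ^ 2 * v ^ 2 - 2 * u ^ 3 * v, by clear h; aesop, ?_⟩
  linear_combination -(v - u + p * u * v - 2 * p * u ^ 2) * h

lemma one_div_sub_natCast_cube_add_mem {i : ℕ} (hi0 : 0 < i) (hi : i < p) :
    1 / ((p : ℚ) - i) ^ 3 + 1 / (i : ℚ) ^ 3 ∈ powMultiples p 1 := by
  have h := one_div_sub_natCast_add_mem_one hi0 hi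
  have hu := one_div_natCast_mem_integralAt hi0 hi
  have hv := one_div_sub_natCast_mem hi0 hi
  simp only [← one_div_pow]
  set u := 1 / (i : ℚ)
  set v := 1 / ((p : ℚ) - i)
  clear_value u v
  have hc : v ^ 2 - v * u + u ^ 2 ∈ integralAt p := by aesop
  convert smul_mem_powMultiples hc h using 1
  ring

lemma powHarmonic_two_sub_mem (hn : p = 2 * n + 1) :
    powHarmonic 2 (2 * n) - (2 * powHarmonic 2 n + 2 * p * powHarmonic 3 n) ∈
      powMultiples p 2 := by
  rw [powHarmonic_pair, ← hn, powHarmonic, powHarmonic, mul_sum, mul_sum, ← sum_add_distrib,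
    ← sum_sub_distrib]
  refine sum_mem fun i hi => ?_
  have := mem_range.1 hi
  convert one_div_sub_natCast_sq_sub_mem (p := p) (i := i + 1) (by omega) (by omega) using 1
  push_cast
  ring

lemma powHarmonic_two_sub_mem' (hn : p = 2 * n + 1) :
    powHarmonic 2 (2 * n) - (powHarmonic 2 n / 2 + p * powHarmonic 3 n / 4) ∈
      powMultiples p 2 := by
  rw [powHarmonic_pair_even, ← hn, powHarmonic, powHarmonic, sum_div, mul_sum, sum_div,
    ← sum_add_distrib, ← sum_sub_distrib]
  refine sum_mem fun i hi => ?_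
  have := mem_range.1 hi
  convert one_div_sub_natCast_sq_sub_mem (p := p) (i := 2 * (i + 1)) (by omega) (by omega) using 1
  push_cast
  have : (i : ℚ) + 1 ≠ 0 := by positivity
  field_simp
  ring

/-- `H_{p-1}^{(2)} ≡ -(p/3) H_n^{(3)}` modulo `p ^ 2`. -/
lemma powHarmonic_two_full (hp3 : 3 < p) (hn : p = 2 * n + 1) :
    powHarmonic 2 (2 * n) + p * powHarmonic 3 n / 3 ∈ powMultiples p 2 := by
  have h := powHarmonic_two_sub_mem hn
  have h' := powHarmonic_two_sub_mem' hn
  have ht := third_mem_integralAt hp3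
  have h4 : (4 * (1 / 3) : ℚ) ∈ integralAt p := by aesop
  convert sub_mem (smul_mem_powMultiples h4 h') (smul_mem_powMultiples ht h) using 1
  ring

/-- `H_n^{(2)} ≡ -(7p/6) H_n^{(3)}` modulo `p ^ 2`. -/
lemma powHarmonic_two_half (hp3 : 3 < p) (hn : p = 2 * n + 1) :
    powHarmonic 2 n + 7 * p * powHarmonic 3 n / 6 ∈ powMultiples p 2 := by
  have h := powHarmonic_two_sub_mem hn
  have h' := powHarmonic_two_full hp3 hn
  have hh := half_mem_integralAt hp3
  convert smul_mem_powMultiples hh (sub_mem h' h) using 1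
  ring

/-- `H_{p-1} ≡ (p²/6) H_n^{(3)}` modulo `p ^ 3`. -/
lemma powHarmonic_one_full (hp3 : 3 < p) (hn : p = 2 * n + 1) :
    powHarmonic 1 (2 * n) - p ^ 2 * powHarmonic 3 n / 6 ∈ powMultiples p 3 := by
  have h : powHarmonic 1 (2 * n) + (p * powHarmonic 2 n + p ^ 2 * powHarmonic 3 n) ∈
      powMultiples p 3 := by
    rw [powHarmonic_pair, ← hn, powHarmonic, powHarmonic, mul_sum, mul_sum, ← sum_add_distrib,
      ← sum_add_distrib]
    refine sum_mem fun i hi => ?_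
    have := mem_range.1 hi
    convert one_div_sub_natCast_add_mem (p := p) (i := i + 1) (by omega) (by omega) using 1
    push_cast
    ring
  have hp1 := pow_mul_mem_powMultiples (p := p) 1 (one_mem _)
  convert sub_mem h (mul_mem_powMultiples hp1 (powHarmonic_two_half hp3 hn)) using 1
  ring

lemma powHarmonic_three_full (hn : p = 2 * n + 1) :
    powHarmonic 3 (2 * n) ∈ powMultiples p 1 := by
  rw [powHarmonic_pair, ← hn]
  refine sum_mem fun i hi => ?_
  have := mem_range.1 hi
  rw [add_comm]
  exact one_div_sub_natCast_cube_add_mem (by omega) (by omega)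

lemma powHarmonic_one_full_mem (hp3 : 3 < p) (hn : p = 2 * n + 1) :
    powHarmonic 1 (2 * n) ∈ powMultiples p 2 := by
  have hZ := powHarmonic_mem_integralAt (p := p) 3 (m := n) (by omega)
  have hh := half_mem_integralAt hp3
  have ht := third_mem_integralAt hp3
  have hc : powHarmonic 3 n * (1 / 2 * (1 / 3)) ∈ integralAt p := by aesop
  convert add_mem (powMultiples_mono (by norm_num : 2 ≤ 3) (powHarmonic_one_full hp3 hn))
    (pow_mul_mem_powMultiples 2 hc) using 1
  ring

lemma powHarmonic_two_full_mem (hp3 : 3 < p) (hn : p = 2 * n + 1) :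
    powHarmonic 2 (2 * n) ∈ powMultiples p 1 := by
  have hZ := powHarmonic_mem_integralAt (p := p) 3 (m := n) (by omega)
  have ht := third_mem_integralAt hp3
  have hc : powHarmonic 3 n * -(1 / 3) ∈ integralAt p := by aesop
  convert add_mem (powMultiples_mono (by norm_num : 1 ≤ 2) (powHarmonic_two_full hp3 hn))
    (pow_mul_mem_powMultiples 1 hc) using 1
  ring

/-- `H_{p-1-j} ≡ H_j + p H_j^{(2)}` modulo `p ^ 2`. -/
lemma powHarmonic_one_reflect (hp3 : 3 < p) (hn : p = 2 * n + 1) {j : ℕ} (hj : j ≤ 2 * n) :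
    powHarmonic 1 (2 * n - j) - (powHarmonic 1 j + p * powHarmonic 2 j) ∈ powMultiples p 2 := by
  induction j with
  | zero => simpa [powHarmonic_zero] using powHarmonic_one_full_mem hp3 hn
  | succ j ih =>
    have ih := ih (by omega)
    have h := powMultiples_mono (by norm_num : 2 ≤ 3)
      (one_div_sub_natCast_add_mem (p := p) (i := j + 1) (by omega) (by omega))
    have hu := one_div_add_one_mem_integralAt (p := p) (m := j) (by omega)
    have h3 := pow_mul_mem_powMultiples 2 (pow_mem hu 3)
    rw [one_div_pow] at h3
    rw [show 2 * n - j = 2 * n - (j + 1) + 1 by omega] at ih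
    have e : ((2 * n - (j + 1) : ℕ) : ℚ) + 1 = p - (j + 1 : ℕ) := by
      rw [Nat.cast_sub hj, hn]; push_cast; ring
    rw [powHarmonic_succ, e] at ih
    convert add_mem (sub_mem ih h) h3 using 1
    simp only [powHarmonic_succ]
    push_cast
    ring

/-- `H_{p-1-j}^{(2)} ≡ -H_j^{(2)}` modulo `p`. -/
lemma powHarmonic_two_reflect (hp3 : 3 < p) (hn : p = 2 * n + 1) {j : ℕ} (hj : j ≤ 2 * n) :
    powHarmonic 2 (2 * n - j) + powHarmonic 2 j ∈ powMultiples p 1 := by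
  induction j with
  | zero => simpa [powHarmonic_zero] using powHarmonic_two_full_mem hp3 hn
  | succ j ih =>
    have ih := ih (by omega)
    have h := powMultiples_mono (by norm_num : 1 ≤ 2)
      (one_div_sub_natCast_sq_sub_mem (p := p) (i := j + 1) (by omega) (by omega))
    have hu := one_div_add_one_mem_integralAt (p := p) (m := j) (by omega)
    have h3 := pow_mul_mem_powMultiples 1 (mul_mem (ofNat_mem _ 2) (pow_mem hu 3))
    rw [one_div_pow] at h3
    rw [show 2 * n - j = 2 * n - (j + 1) + 1 by omega] at ih
    have e : ((2 * n - (j + 1) : ℕ) : ℚ) + 1 = p - (j + 1 : ℕ) := by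
      rw [Nat.cast_sub hj, hn]; push_cast; ring
    rw [powHarmonic_succ, e] at ih
    convert sub_mem (sub_mem ih h) h3 using 1
    simp only [powHarmonic_succ]
    push_cast
    ring

end Reflection

section FermatQuotient

variable {p n : ℕ} [hp : Fact p.Prime]

lemma intCast_mem_powMultiples_one {a : ℤ} (ha : (p : ℤ) ∣ a) : (a : ℚ) ∈ powMultiples p 1 := by
  obtain ⟨b, rfl⟩ := ha
  refine mem_powMultiples.2 ⟨b, intCast_mem _ b, ?_⟩
  push_cast
  ring

lemma natCast_pow_sub_one_mem {i : ℕ} (hi0 : 0 < i) (hi : i < p) :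
    (i : ℚ) ^ (p - 1) - 1 ∈ powMultiples p 1 := by
  have h := Int.ModEq.pow_card_sub_one_eq_one hp.out (n := (i : ℤ))
    (Nat.isCoprime_iff_coprime.2 (Nat.coprime_of_lt_prime hi0.ne' hi hp.out).symm)
  exact_mod_cast intCast_mem_powMultiples_one h.symm.dvd

lemma natCast_mul_fermatQ : (p : ℚ) * fermatQ p = 2 ^ (p - 1) - 1 :=
  mul_div_cancel₀ _ (Nat.cast_ne_zero.2 hp.out.ne_zero)

lemma fermatQ_mem_integralAt (hp3 : 3 < p) : fermatQ p ∈ integralAt p := by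
  have h := natCast_pow_sub_one_mem (p := p) (i := 2) (by norm_num) (by omega)
  rw [Nat.cast_ofNat, ← natCast_mul_fermatQ] at h
  exact mem_powMultiples_zero.1 (mem_powMultiples_of_pow_mul (s := 1) (by simpa using h))

set_option maxHeartbeats 1000000 in
/-- Solving `∏_{i ≤ n} (1 - p / i) = 2^{p-1} ∏_{i ≤ n} (1 - p / (2i))` for the harmonic number. -/
lemma solve_expansion (hp3 : 3 < p) {q h h₂ Z : ℚ} (hq : q ∈ integralAt p) (hh : h ∈ integralAt p)
    (hZ : Z ∈ integralAt p) (hh₂ : h₂ + 7 * p * Z / 6 ∈ powMultiples p 2)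
    (hF : expansion p h h₂ Z - (1 + p * q) * expansion (p / 2) h h₂ Z ∈ powMultiples p 4) :
    h + 2 * q - p * q ^ 2 + 2 / 3 * p ^ 2 * q ^ 3 - 7 / 24 * p ^ 2 * Z ∈ powMultiples p 3 := by
  have half := half_mem_integralAt hp3
  have third := third_mem_integralAt hp3
  have hp1 : (p : ℚ) ∈ powMultiples p 1 := by
    simpa using pow_mul_mem_powMultiples (p := p) 1 (one_mem _)
  have hp2 : (p : ℚ) ^ 2 ∈ powMultiples p 2 := by
    simpa using pow_mul_mem_powMultiples (p := p) 2 (one_mem _)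
  have hb : h₂ ∈ powMultiples p 1 := by
    have hc : -(7 * Z * (1 / 2 * (1 / 3))) ∈ integralAt p := by aesop
    convert add_mem (powMultiples_mono (by norm_num : 1 ≤ 2) hh₂)
      (smul_mem_powMultiples hc hp1) using 1
    ring
  have hb' := mem_integralAt_of_mem_powMultiples hb
  obtain ⟨e₂, he₂⟩ : ∃ e₂, e₂ = (h ^ 2 - h₂) / 2 := ⟨_, rfl⟩
  obtain ⟨e₃, he₃⟩ : ∃ e₃, e₃ = (h ^ 3 - 3 * h * h₂ + 2 * Z) / 6 := ⟨_, rfl⟩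
  have me₂ : e₂ ∈ integralAt p := by
    rw [he₂, div_eq_mul_one_div]
    clear he₂ he₃
    aesop
  have me₃ : e₃ ∈ integralAt p := by
    rw [he₃, div_eq_mul_one_div, show (1 / 6 : ℚ) = 1 / 2 * (1 / 3) by norm_num]
    clear he₂ he₃
    aesop
  have hG : h + 2 * q - p * (3 / 2 * e₂ + q * h) + p ^ 2 * (7 / 4 * e₃ + q * e₂ / 2) ∈
      powMultiples p 3 := by
    refine mem_powMultiples_of_pow_mul (s := 1) ?_
    have hc : q * e₃ * (1 / 2 * (1 / 2)) ∈ integralAt p := by clear he₂ he₃; aesop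
    convert add_mem (smul_mem_powMultiples (neg_mem (ofNat_mem _ 2)) hF)
      (pow_mul_mem_powMultiples 4 hc) using 1
    simp only [expansion, ← he₂, ← he₃]
    norm_num
    ring
  have s₁ : h + 2 * q ∈ powMultiples p 1 := by
    have hc : 3 * (1 / 2) * e₂ + q * h - p * (7 * (1 / 2 * (1 / 2)) * e₃ + q * e₂ * (1 / 2)) ∈
        integralAt p := by clear he₂ he₃; aesop
    convert add_mem (powMultiples_mono (by norm_num : 1 ≤ 3) hG)
      (smul_mem_powMultiples hc hp1) using 1
    ring
  have t₁ : e₂ - 2 * q ^ 2 ∈ powMultiples p 1 := by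
    have hc : (h - 2 * q) * (1 / 2) ∈ integralAt p := by clear he₂ he₃; aesop
    convert sub_mem (smul_mem_powMultiples hc s₁) (smul_mem_powMultiples half hb) using 1
    rw [he₂]
    ring
  have s₂ : h + 2 * q - p * q ^ 2 ∈ powMultiples p 2 := by
    have hc : 3 * (1 / 2) ∈ integralAt p := by aesop
    have hd : 7 * (1 / 2 * (1 / 2)) * e₃ + q * e₂ * (1 / 2) ∈ integralAt p := by
      clear he₂ he₃; aesop
    convert sub_mem (add_mem (powMultiples_mono (by norm_num : 2 ≤ 3) hG)
      (mul_mem_powMultiples hp1 (add_mem (smul_mem_powMultiples hc t₁)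
        (smul_mem_powMultiples hq s₁)))) (pow_mul_mem_powMultiples 2 hd) using 1
    ring
  have t₂ : e₂ - 2 * q ^ 2 + 2 * p * q ^ 3 - 7 / 12 * p * Z ∈ powMultiples p 2 := by
    have hc : (h - 2 * q + p * q ^ 2) * (1 / 2) ∈ integralAt p := by clear he₂ he₃; aesop
    have hd : q ^ 4 * (1 / 2) ∈ integralAt p := by clear he₂ he₃; aesop
    convert sub_mem (add_mem (smul_mem_powMultiples hc s₂) (pow_mul_mem_powMultiples 2 hd))
      (smul_mem_powMultiples half hh₂) using 1
    rw [he₂]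
    ring
  have t₃ : e₃ + 4 / 3 * q ^ 3 - Z / 3 ∈ powMultiples p 1 := by
    have hc : (h ^ 2 - 2 * q * h + 4 * q ^ 2) * (1 / 2 * (1 / 3)) ∈ integralAt p := by
      clear he₂ he₃; aesop
    have hd : h * (1 / 2) ∈ integralAt p := by clear he₂ he₃; aesop
    convert sub_mem (smul_mem_powMultiples hc s₁) (smul_mem_powMultiples hd hb) using 1
    rw [he₃]
    ring
  have hc : 3 * (1 / 2) ∈ integralAt p := by aesop
  have hd : 7 * (1 / 2 * (1 / 2)) ∈ integralAt p := by aesop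
  have he : q * (1 / 2) ∈ integralAt p := by clear he₂ he₃; aesop
  convert sub_mem (add_mem hG (mul_mem_powMultiples hp1 (add_mem (smul_mem_powMultiples hc t₂)
    (smul_mem_powMultiples hq s₂)))) (mul_mem_powMultiples hp2
      (add_mem (smul_mem_powMultiples hd t₃) (smul_mem_powMultiples he t₁))) using 1
  ring

/-- The harmonic number `H_n` modulo `p ^ 3` for `p = 2n + 1`. -/
lemma powHarmonic_one_half (hp3 : 3 < p) (hn : p = 2 * n + 1) :
    powHarmonic 1 n + 2 * fermatQ p - p * fermatQ p ^ 2 + 2 / 3 * p ^ 2 * fermatQ p ^ 3 -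
      7 / 24 * p ^ 2 * powHarmonic 3 n ∈ powMultiples p 3 := by
  have hq := fermatQ_mem_integralAt hp3
  have hp1 : (p : ℚ) ∈ powMultiples p 1 := by
    simpa using pow_mul_mem_powMultiples (p := p) 1 (one_mem _)
  have hph : (p : ℚ) / 2 ∈ powMultiples p 1 := by
    convert smul_mem_powMultiples (half_mem_integralAt hp3) hp1 using 1
    ring
  refine solve_expansion hp3 hq (powHarmonic_mem_integralAt 1 (by omega))
    (powHarmonic_mem_integralAt 3 (by omega)) (powHarmonic_two_half hp3 hn) ?_
  have h₁ := prodOneSubDiv_sub_expansion_mem hp3 hp1 (k := n) (by omega)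
  have h₂ := prodOneSubDiv_sub_expansion_mem hp3 hph (k := n) (by omega)
  have h := two_pow_mul_prodOneSubDiv n
  have hQ := natCast_mul_fermatQ (p := p)
  rw [← hn, show 2 * n = p - 1 by omega, eq_add_of_sub_eq' hQ.symm] at h
  have hc : 1 + p * fermatQ p ∈ integralAt p := by aesop
  convert sub_mem (smul_mem_powMultiples hc h₂) h₁ using 1
  linear_combination -h

end FermatQuotient

section DoubleSums

variable {p n : ℕ} [hp : Fact p.Prime]

/-- The alternating double sum `∑_{i < j ≤ N} (-1)^j / (i^r j)`. -/
def altHarmonic (r N : ℕ) : ℚ :=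
  ∑ k ∈ range N, (-1) ^ (k + 1) * powHarmonic r k / ((k : ℚ) + 1)

lemma natCast_mem_powMultiples_one : (p : ℚ) ∈ powMultiples p 1 := by
  simpa using pow_mul_mem_powMultiples (p := p) 1 (one_mem _)

/-- The expansion of `∏ (1 - t / j)` modulo `p ^ 3` for `t` divisible by `p`. -/
lemma prodOneSubDiv_sub_mem (hp3 : 3 < p) {t : ℚ} (ht : t ∈ powMultiples p 1) {k : ℕ}
    (hk : k < p) :
    prodOneSubDiv t k -
      (1 - t * powHarmonic 1 k + t ^ 2 * ((powHarmonic 1 k ^ 2 - powHarmonic 2 k) / 2)) ∈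
      powMultiples p 3 := by
  have h := powMultiples_mono (by norm_num : 3 ≤ 4) (prodOneSubDiv_sub_expansion_mem hp3 ht hk)
  have h1 := powHarmonic_mem_integralAt (p := p) 1 hk
  have h2 := powHarmonic_mem_integralAt (p := p) 2 hk
  have h3 := powHarmonic_mem_integralAt (p := p) 3 hk
  have half := half_mem_integralAt hp3
  have third := third_mem_integralAt hp3
  have hc : (powHarmonic 1 k ^ 3 - 3 * powHarmonic 1 k * powHarmonic 2 k + 2 * powHarmonic 3 k) *
      (1 / 2 * (1 / 3)) ∈ integralAt p := by clear h; aesop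
  convert sub_mem h (smul_mem_powMultiples hc
    (mul_mem_powMultiples (mul_mem_powMultiples ht ht) ht)) using 1
  simp only [expansion]
  ring

lemma sum_prodOneSubDiv_mem (hp3 : 3 < p) (hn : p = 2 * n + 1) {t : ℚ}
    (ht : t ∈ powMultiples p 1) :
    ∑ k ∈ range (2 * n), (-1) ^ k / ((k : ℚ) + 1) * prodOneSubDiv t k +
        (powHarmonic 1 n - powHarmonic 1 (2 * n)) - t * altHarmonic 1 (2 * n) -
      t ^ 2 * ∑ k ∈ range (2 * n), (-1) ^ k / ((k : ℚ) + 1) *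
        ((powHarmonic 1 k ^ 2 - powHarmonic 2 k) / 2) ∈ powMultiples p 3 := by
  have hA := sum_neg_one_pow_div 1 n
  norm_num at hA
  rw [← hA, altHarmonic, mul_sum, mul_sum, ← sum_add_distrib, ← sum_sub_distrib,
    ← sum_sub_distrib]
  refine sum_mem fun k hk => ?_
  have := mem_range.1 hk
  have hu := one_div_add_one_mem_integralAt (p := p) (m := k) (by omega)
  have hc : (-1) ^ k * (1 / ((k : ℚ) + 1)) ∈ integralAt p :=
    mul_mem (pow_mem (neg_mem (one_mem _)) _) hu
  convert smul_mem_powMultiples hc (prodOneSubDiv_sub_mem hp3 ht (k := k) (by omega)) using 1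
  ring

/-- `C(2p - 1, p - 1) ≡ 1 + (p³/3) H_n^{(3)}` modulo `p ^ 4`. -/
lemma prodOneSubDiv_neg_mem (hp3 : 3 < p) (hn : p = 2 * n + 1) :
    prodOneSubDiv (-p) (2 * n) - (1 + p ^ 3 * powHarmonic 3 n / 3) ∈ powMultiples p 4 := by
  have h := prodOneSubDiv_sub_expansion_mem hp3 (neg_mem natCast_mem_powMultiples_one) (k := 2 * n)
    (by omega)
  have half := half_mem_integralAt hp3
  have third := third_mem_integralAt hp3
  have hH := powHarmonic_one_full_mem hp3 hn
  have hX := powHarmonic_two_full_mem hp3 hn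
  have hH' := mem_integralAt_of_mem_powMultiples hH
  have hX' := mem_integralAt_of_mem_powMultiples hX
  have hp1 := natCast_mem_powMultiples_one (p := p)
  have hp2 := mul_mem_powMultiples hp1 hp1
  have hp3' := mul_mem_powMultiples hp2 hp1
  have k₁ := mul_mem_powMultiples hp1 (powHarmonic_one_full hp3 hn)
  have k₂ := smul_mem_powMultiples half
    (mul_mem_powMultiples hp2 (powHarmonic_two_full hp3 hn))
  have hc : powHarmonic 1 (2 * n) * (1 / 2) ∈ integralAt p := mul_mem hH' half
  have k₃ := smul_mem_powMultiples hc (mul_mem_powMultiples hp2 hH)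
  have hd : powHarmonic 1 (2 * n) ^ 2 * (1 / 2 * (1 / 3)) - powHarmonic 2 (2 * n) * (1 / 2) ∈
      integralAt p := sub_mem (mul_mem (pow_mem hH' _) (mul_mem half third)) (mul_mem hX' half)
  have k₄ := smul_mem_powMultiples hd
    (mul_mem_powMultiples hp3' (powMultiples_mono (by norm_num : 1 ≤ 2) hH))
  have k₅ := smul_mem_powMultiples third
    (mul_mem_powMultiples hp3' (powHarmonic_three_full hn))
  convert add_mem (add_mem (add_mem (sub_mem (add_mem h k₁) k₂) k₃) k₄) k₅ using 1
  simp only [expansion]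
  ring

/-- `∑_{i<j<p} (-1)^j / (i j)` modulo `p ^ 2`. -/
lemma altHarmonic_one_mem (hp3 : 3 < p) (hn : p = 2 * n + 1) :
    altHarmonic 1 (2 * n) -
      (fermatQ p ^ 2 - p * fermatQ p ^ 3 + 13 / 48 * p * powHarmonic 3 n) ∈ powMultiples p 2 := by
  have half := half_mem_integralAt hp3
  have hp1 := natCast_mem_powMultiples_one (p := p)
  have hp0 : (p : ℚ) ≠ 0 := Nat.cast_ne_zero.2 hp.out.ne_zero
  have hQ := natCast_mul_fermatQ (p := p)
  rw [show p - 1 = 2 * n by omega] at hQ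
  have h2p : (2 * p : ℚ) ∈ powMultiples p 1 := smul_mem_powMultiples (ofNat_mem _ 2) hp1
  have h₁ := sum_prodOneSubDiv_mem hp3 hn hp1
  have h₂ := sum_prodOneSubDiv_mem hp3 hn h2p
  have e₁ : ∑ k ∈ range (2 * n), (-1) ^ k / ((k : ℚ) + 1) * prodOneSubDiv p k =
      2 * fermatQ p := by
    have := (sum_choose_succ (2 * n) (2 * n) (by omega)).symm.trans (sum_choose_self (2 * n))
    rw [← hn] at this
    refine mul_left_cancel₀ hp0 ?_
    linear_combination this - 2 * hQ
  have e₂ : ∑ k ∈ range (2 * n), (-1) ^ k / ((k : ℚ) + 1) * prodOneSubDiv (2 * p) k -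
      (2 * fermatQ p + p * fermatQ p ^ 2 - p ^ 2 * powHarmonic 3 n / 6) ∈ powMultiples p 3 := by
    have := (sum_choose_succ (2 * p - 1) (2 * n) (by omega)).symm
    rw [show 2 * p - 1 + 1 = 2 * (2 * n + 1) by omega, sum_choose_two_mul, ← hn,
      show (4 : ℚ) = 2 ^ 2 by norm_num, ← pow_mul, mul_comm 2 (2 * n), pow_mul,
      eq_add_of_sub_eq' hQ.symm] at this
    push_cast at this
    refine mem_powMultiples_of_pow_mul (s := 1) ?_
    convert smul_mem_powMultiples (neg_mem half) (prodOneSubDiv_neg_mem hp3 hn) using 1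
    linear_combination 1 / 2 * this
  have h₃ := powHarmonic_one_half hp3 hn
  have h₄ := powHarmonic_one_full hp3 hn
  rw [e₁] at h₁
  refine mem_powMultiples_of_pow_mul (s := 1) ?_
  have h3m : (3 : ℚ) ∈ integralAt p := ofNat_mem _ 3
  have h4m : (4 : ℚ) ∈ integralAt p := ofNat_mem _ 4
  convert smul_mem_powMultiples half (sub_mem (smul_mem_powMultiples h3m (sub_mem h₃ h₄))
    (sub_mem (smul_mem_powMultiples h4m h₁) (sub_mem h₂ e₂))) using 1
  ring

/-- `∑_{i<j<p} (-1)^j / (i² j) ≡ -H_n^{(3)} / 8` modulo `p`. -/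
lemma altHarmonic_two_mem (hp3 : 3 < p) (hn : p = 2 * n + 1) :
    altHarmonic 2 (2 * n) + powHarmonic 3 n / 8 ∈ powMultiples p 1 := by
  have half := half_mem_integralAt hp3
  have hA := sum_neg_one_pow_div 3 n
  have h : altHarmonic 2 (2 * n) + altHarmonic 2 (2 * n) +
      ∑ k ∈ range (2 * n), (-1) ^ (k + 1) / ((k : ℚ) + 1) ^ 3 ∈ powMultiples p 1 := by
    nth_rewrite 1 [altHarmonic]
    rw [← sum_range_reflect, altHarmonic, ← sum_add_distrib, ← sum_add_distrib]
    refine sum_mem fun k hk => ?_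
    have hk := mem_range.1 hk
    have e : ((2 * n - 1 - k : ℕ) : ℚ) + 1 = p - (k + 1 : ℕ) := by
      rw [show 2 * n - 1 - k = 2 * n - (k + 1) by omega, Nat.cast_sub (by omega), hn]
      push_cast
      ring
    have e' : (-1 : ℚ) ^ (2 * n - 1 - k + 1) = (-1) ^ k := by
      have : (-1 : ℚ) ^ (2 * n - 1 - k + 1) * (-1) ^ k = 1 := by
        rw [← pow_add, show 2 * n - 1 - k + 1 + k = 2 * n by omega, pow_mul]
        norm_num
      rcases neg_one_pow_eq_or ℚ k with h | h <;> rw [h] at this ⊢ <;> linarith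
    have hr := powHarmonic_two_reflect hp3 hn (j := k + 1) (by omega)
    have hi := one_div_sub_natCast_add_mem_one (p := p) (i := k + 1) (by omega) (by omega)
    have hu := one_div_sub_natCast_mem (p := p) (i := k + 1) (by omega) (by omega)
    have hX := powHarmonic_mem_integralAt (p := p) 2 (m := k + 1) (by omega)
    have hs : (-1 : ℚ) ^ k ∈ integralAt p := pow_mem (neg_mem (one_mem _)) _
    rw [e, e', show 2 * n - 1 - k = 2 * n - (k + 1) by omega]
    convert sub_mem (smul_mem_powMultiples (mul_mem hs hu) hr)
      (smul_mem_powMultiples (mul_mem hs hX) hi) using 1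
    rw [powHarmonic_succ]
    have : (k : ℚ) + 1 ≠ 0 := by positivity
    push_cast
    field_simp
    ring
  rw [hA] at h
  convert smul_mem_powMultiples half (add_mem h (powHarmonic_three_full hn)) using 1
  ring

/-- `∑_{i<j<p} 1 / (i² j) ≡ H_n^{(3)} / 2` modulo `p`. -/
lemma sum_powHarmonic_two_div_mem (hp3 : 3 < p) (hn : p = 2 * n + 1) :
    ∑ k ∈ range (2 * n), powHarmonic 2 k / ((k : ℚ) + 1) - powHarmonic 3 n / 2 ∈
      powMultiples p 1 := by
  have half := half_mem_integralAt hp3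
  have third := third_mem_integralAt hp3
  have hp1 := natCast_mem_powMultiples_one (p := p)
  have hp2 := mul_mem_powMultiples hp1 hp1
  have hH := powHarmonic_one_full_mem hp3 hn
  have hH' := mem_integralAt_of_mem_powMultiples hH
  have hX' := mem_integralAt_of_mem_powMultiples (powHarmonic_two_full_mem hp3 hn)
  have h : -powHarmonic 1 (2 * n) - (powHarmonic 1 (2 * n) -
      p * ∑ k ∈ range (2 * n), powHarmonic 1 (k + 1) / ((k : ℚ) + 1) +
      p ^ 2 / 2 * ∑ k ∈ range (2 * n),
        (powHarmonic 1 (k + 1) ^ 2 - powHarmonic 2 (k + 1)) / ((k : ℚ) + 1)) ∈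
      powMultiples p 3 := by
    rw [← sum_prodOneSubDiv_div, ← hn, powHarmonic, mul_sum, mul_sum, ← sum_sub_distrib,
      ← sum_add_distrib, ← sum_sub_distrib]
    refine sum_mem fun k hk => ?_
    have := mem_range.1 hk
    have hu := one_div_add_one_mem_integralAt (p := p) (m := k) (by omega)
    convert smul_mem_powMultiples hu (prodOneSubDiv_sub_mem hp3 hp1 (k := k + 1) (by omega)) using 1
    ring
  rw [sum_powHarmonic_succ_one_div, sum_sq_sub_div] at h
  refine mem_powMultiples_of_pow_mul (s := 2) ?_
  have k₁ := powHarmonic_one_full hp3 hn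
  have k₂ := smul_mem_powMultiples half (mul_mem_powMultiples hp1 (powHarmonic_two_full hp3 hn))
  have hc : powHarmonic 1 (2 * n) * (1 / 2) ∈ integralAt p := mul_mem hH' half
  have k₃ := smul_mem_powMultiples hc (mul_mem_powMultiples hp1 hH)
  have hd : powHarmonic 1 (2 * n) ^ 2 * (1 / 2 * (1 / 3)) + powHarmonic 2 (2 * n) * (1 / 2) ∈
      integralAt p := add_mem (mul_mem (pow_mem hH' _) (mul_mem half third)) (mul_mem hX' half)
  have k₄ := smul_mem_powMultiples hd
    (mul_mem_powMultiples hp2 (powMultiples_mono (by norm_num : 1 ≤ 2) hH))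
  have hf : 2 * (1 / 3) ∈ integralAt p := mul_mem (ofNat_mem _ 2) third
  have k₅ := smul_mem_powMultiples hf (mul_mem_powMultiples hp2 (powHarmonic_three_full hn))
  have h2m : (2 : ℚ) ∈ integralAt p := ofNat_mem _ 2
  convert sub_mem (add_mem (sub_mem (sub_mem (add_mem h (smul_mem_powMultiples h2m k₁)) k₂) k₃) k₄)
    k₅ using 1
  ring

end DoubleSums

section Bernoulli

variable {p n : ℕ} [hp : Fact p.Prime]

lemma bernoulli'_mem_integralAt {m : ℕ} (hm : m + 1 < p) : bernoulli' m ∈ integralAt p := by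
  induction m using Nat.strong_induction_on with
  | _ m ih =>
    rw [bernoulli'_def]
    refine sub_mem (one_mem _) (sum_mem fun k hk => mul_mem ?_ ?_)
    · have hk := mem_range.1 hk
      rw [div_eq_mul_one_div, ← Nat.cast_sub hk.le]
      exact mul_mem (natCast_mem _ _) (one_div_add_one_mem_integralAt (by omega))
    · have hk := mem_range.1 hk
      exact ih k hk (by omega)

lemma bernoulli_mem_integralAt {m : ℕ} (hm : m + 1 < p) : bernoulli m ∈ integralAt p :=
  mul_mem (pow_mem (neg_mem (one_mem _)) _) (bernoulli'_mem_integralAt hm)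

lemma sum_pow_sub_mul_bernoulli_mem {m : ℕ} (hm : m + 1 < p) :
    ∑ k ∈ range p, (k : ℚ) ^ m - p * bernoulli m ∈ powMultiples p 2 := by
  rw [sum_range_pow, sum_range_succ]
  have hm1 : (m : ℚ) + 1 ≠ 0 := by positivity
  have hlast : bernoulli m * ((m + 1).choose m) * (p : ℚ) ^ (m + 1 - m) / (m + 1) =
      p * bernoulli m := by
    rw [Nat.choose_succ_self_right, Nat.add_sub_cancel_left]
    push_cast
    field_simp
  rw [hlast, add_sub_cancel_right]
  refine sum_mem fun i hi => ?_
  have hi := mem_range.1 hi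
  refine powMultiples_mono (s := m + 1 - i) (by omega) ?_
  convert pow_mul_mem_powMultiples (m + 1 - i)
    (mul_mem (mul_mem (bernoulli_mem_integralAt (p := p) (m := i) (by omega))
      (natCast_mem _ ((m + 1).choose i))) (one_div_add_one_mem_integralAt hm)) using 1
  ring

lemma natCast_sub_pow_even_mem (l : ℕ) {i : ℕ} (hi : i ≤ p) :
    ((p - i : ℕ) : ℚ) ^ (2 * l + 2) - (i : ℚ) ^ (2 * l + 2) +
      (2 * l + 2) * p * (i : ℚ) ^ (2 * l + 1) ∈ powMultiples p 2 := by
  obtain ⟨c, hc⟩ := Polynomial.powAddExpansion (-(i : ℤ)) (p : ℤ) (2 * l + 2)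
  refine mem_powMultiples.2 ⟨c, intCast_mem _ c, ?_⟩
  have hc := congrArg (Int.cast (R := ℚ)) hc
  rw [Even.neg_pow ⟨l + 1, by ring⟩, show 2 * l + 2 - 1 = 2 * l + 1 by omega,
    Odd.neg_pow ⟨l, rfl⟩] at hc
  push_cast at hc
  rw [Nat.cast_sub hi]
  linear_combination -hc

lemma sum_pow_even_mem (l : ℕ) (hn : p = 2 * n + 1) :
    ∑ k ∈ range p, (k : ℚ) ^ (2 * l + 2) - 2 * ∑ i ∈ range n, ((i : ℚ) + 1) ^ (2 * l + 2) +
      (2 * l + 2) * p * ∑ i ∈ range n, ((i : ℚ) + 1) ^ (2 * l + 1) ∈ powMultiples p 2 := by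
  have h : ∑ k ∈ range p, (k : ℚ) ^ (2 * l + 2) = _ :=
    (congrArg (fun m => ∑ k ∈ range m, (k : ℚ) ^ (2 * l + 2)) hn).trans (sum_range_succ' _ _)
  rw [h, sum_range_two_mul_pair (fun k => (k : ℚ) ^ (2 * l + 2)) n, ← hn]
  have h2 := sum_mem (t := range n) (S := powMultiples p 2)
    fun i hi => natCast_sub_pow_even_mem (p := p) l (i := i + 1)
      (by have := mem_range.1 hi; omega)
  convert h2 using 1
  rw [Nat.cast_zero, zero_pow (by omega), add_zero]
  simp only [mul_sum, ← sum_add_distrib, ← sum_sub_distrib]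
  refine sum_congr rfl fun i _ => ?_
  push_cast
  ring

lemma sum_pow_even_mem' (l : ℕ) (hn : p = 2 * n + 1) :
    ∑ k ∈ range p, (k : ℚ) ^ (2 * l + 2) -
      2 * 2 ^ (2 * l + 2) * ∑ i ∈ range n, ((i : ℚ) + 1) ^ (2 * l + 2) +
      (2 * l + 2) * p * 2 ^ (2 * l + 1) * ∑ i ∈ range n, ((i : ℚ) + 1) ^ (2 * l + 1) ∈
        powMultiples p 2 := by
  have h : ∑ k ∈ range p, (k : ℚ) ^ (2 * l + 2) = _ :=
    (congrArg (fun m => ∑ k ∈ range m, (k : ℚ) ^ (2 * l + 2)) hn).trans (sum_range_succ' _ _)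
  rw [h, sum_range_two_mul_pair_even (fun k => (k : ℚ) ^ (2 * l + 2)) n, ← hn]
  have h2 := sum_mem (t := range n) (S := powMultiples p 2)
    fun i hi => natCast_sub_pow_even_mem (p := p) l (i := 2 * (i + 1))
      (by have := mem_range.1 hi; omega)
  convert h2 using 1
  rw [Nat.cast_zero, zero_pow (by omega), add_zero]
  simp only [mul_sum, ← sum_add_distrib, ← sum_sub_distrib]
  refine sum_congr rfl fun i _ => ?_
  push_cast
  simp only [mul_pow]
  ring

lemma sum_pow_sub_powHarmonic_three_mem {l : ℕ} (hl : p = 2 * l + 5) (hn : n < p) :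
    ∑ i ∈ range n, ((i : ℚ) + 1) ^ (2 * l + 1) - powHarmonic 3 n ∈ powMultiples p 1 := by
  rw [powHarmonic, ← sum_sub_distrib]
  refine sum_mem fun i hi => ?_
  have hi := mem_range.1 hi
  convert smul_mem_powMultiples (pow_mem (one_div_add_one_mem_integralAt (p := p) (m := i)
    (by omega)) 3) (natCast_pow_sub_one_mem (p := p) (i := i + 1) (by omega) (by omega)) using 1
  rw [show p - 1 = 2 * l + 1 + 3 by omega]
  push_cast
  have : (i : ℚ) + 1 ≠ 0 := by positivity
  field_simp
  ring

lemma powHarmonic_three_half (hp3 : 3 < p) (hn : p = 2 * n + 1) :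
    powHarmonic 3 n + 2 * bernoulli (p - 3) ∈ powMultiples p 1 := by
  obtain ⟨l, rfl⟩ : ∃ l, n = l + 2 := ⟨n - 2, by omega⟩
  have hm : p - 3 = 2 * l + 2 := by omega
  have hB := sum_pow_sub_mul_bernoulli_mem (p := p) (m := 2 * l + 2) (by omega)
  have hBi := bernoulli_mem_integralAt (p := p) (m := 2 * l + 2) (by omega)
  have h1 := sum_pow_even_mem l hn
  have h2 := sum_pow_even_mem' l hn
  have h3 := sum_pow_sub_powHarmonic_three_mem (p := p) (n := l + 2) (l := l) (by omega) (by omega)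
  have hq := natCast_mul_fermatQ (p := p)
  have hqi := fermatQ_mem_integralAt hp3
  have hlp : (2 * (l : ℚ) + 5) = p := by rw [hn]; push_cast; ring
  rw [hm]
  rw [show p - 1 = 2 * l + 4 by omega] at hq
  have ht : (2 : ℚ) ^ (2 * l + 2) ∈ integralAt p := pow_mem (ofNat_mem _ 2) _
  have hW : ∑ i ∈ range (l + 2), ((i : ℚ) + 1) ^ (2 * l + 1) ∈ integralAt p :=
    sum_mem fun i _ => pow_mem (add_mem (natCast_mem _ i) (one_mem _)) _
  rw [show (2 : ℚ) ^ (2 * l + 4) = 2 ^ (2 * l + 2) * 4 by ring] at hq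
  rw [show (2 : ℚ) ^ (2 * l + 1) = 2 ^ (2 * l + 2) * (1 / 2) by ring] at h2
  set t := (2 : ℚ) ^ (2 * l + 2)
  set q := fermatQ p
  set Y := ∑ k ∈ range p, (k : ℚ) ^ (2 * l + 2)
  set V := ∑ i ∈ range (l + 2), ((i : ℚ) + 1) ^ (2 * l + 2)
  set W := ∑ i ∈ range (l + 2), ((i : ℚ) + 1) ^ (2 * l + 1)
  set Z := powHarmonic 3 (l + 2)
  set B := bernoulli (2 * l + 2)
  have hk : (2 * (l : ℚ) + 2) = p - 3 := by linarith
  rw [hk] at h1 h2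
  clear_value t q Y V W Z B
  have key : (p : ℚ) ^ 1 * (W + 2 * B) ∈ powMultiples p (1 + 1) := by
    obtain rfl : t = (1 + p * q) * (1 / 4) := by linarith
    have h8 := sub_mem (smul_mem_powMultiples (ofNat_mem _ 8)
      (sub_mem (smul_mem_powMultiples ht h1) h2))
      (smul_mem_powMultiples (sub_mem (mul_mem (ofNat_mem _ 8) ht) (ofNat_mem _ 8)) hB)
    have hE : 2 * q * B + W + q * (p - 3) * W ∈ integralAt p := by
      clear hq hn h1 h2 h3 h8 hB hlp hk hm
      aesop
    convert smul_mem_powMultiples (third_mem_integralAt hp3)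
      (sub_mem (pow_mul_mem_powMultiples 2 hE) h8) using 1
    ring
  have := sub_mem (mem_powMultiples_of_pow_mul key) h3
  convert this using 1
  ring

end Bernoulli

section Main

variable {p n : ℕ} [hp : Fact p.Prime]

lemma ratCongr_of_sub_mem {r : ℕ} {a b : ℚ} (h : a - b ∈ powMultiples p r) :
    ratCongr p r a b := by
  obtain ⟨c, hc, h⟩ := mem_powMultiples.1 h
  exact ⟨c, h.symm, hc⟩

lemma sum_harmonic_reflect_mem (hp3 : 3 < p) (hn : p = 2 * n + 1) :
    ∑ k ∈ Icc 1 n, harmonic (p + 1 - 2 * k) / k -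
      (∑ k ∈ range n, powHarmonic 1 (2 * k) / ((k : ℚ) + 1) +
        p * ∑ k ∈ range n, powHarmonic 2 (2 * k) / ((k : ℚ) + 1)) ∈ powMultiples p 2 := by
  have hsum : ∑ k ∈ Icc 1 n, harmonic (p + 1 - 2 * k) / k =
      ∑ k ∈ range n, powHarmonic 1 (2 * n - 2 * k) / ((k : ℚ) + 1) := by
    have h := sum_Ico_add' (fun k : ℕ => harmonic (p + 1 - 2 * k) / (k : ℚ)) 0 n 1
    rw [show Icc 1 n = Ico (0 + 1) (n + 1) by ext; simp, ← h, ← range_eq_Ico]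
    refine sum_congr rfl fun k _ => ?_
    rw [harmonic_eq_powHarmonic, show p + 1 - 2 * (k + 1) = 2 * n - 2 * k by omega]
    push_cast
    rfl
  rw [hsum, mul_sum, ← sum_add_distrib, ← sum_sub_distrib]
  refine sum_mem fun k hk => ?_
  have hk := mem_range.1 hk
  convert smul_mem_powMultiples (one_div_add_one_mem_integralAt (p := p) (m := k) (by omega))
    (powHarmonic_one_reflect hp3 hn (j := 2 * k) (by omega)) using 1
  ring

lemma sum_harmonic_div_mem (hp3 : 3 < p) (hn : p = 2 * n + 1) :
    ∑ k ∈ Icc 1 n, harmonic (p + 1 - 2 * k) / k -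
      (fermatQ p ^ 2 - 4 * fermatQ p + 4 * p * fermatQ p + 2 * p * fermatQ p ^ 2 -
        p * fermatQ p ^ 3 - (13 / 8) * p * bernoulli (p - 3)) ∈ powMultiples p 2 := by
  have hS := sum_harmonic_reflect_mem hp3 hn
  rw [sum_powHarmonic_two_mul_div, sum_powHarmonic_two_mul_div, sum_powHarmonic_one_div,
    sum_inv_odd_sq_mul] at hS
  simp only [pow_one] at hS
  rw [sum_inv_odd_mul] at hS
  have hT := altHarmonic_one_mem hp3 hn
  have hD := altHarmonic_two_mem hp3 hn
  rw [altHarmonic] at hT hD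
  have hC := sum_powHarmonic_two_div_mem hp3 hn
  have hH := powHarmonic_one_full_mem hp3 hn
  have hX := powHarmonic_two_full hp3 hn
  have hh := powHarmonic_one_half hp3 hn
  have hh2 := powHarmonic_two_half hp3 hn
  have hZ := powHarmonic_three_half hp3 hn
  have hHi := mem_integralAt_of_mem_powMultiples hH
  have hqi := fermatQ_mem_integralAt hp3
  have hZi := powHarmonic_mem_integralAt (p := p) 3 (m := n) (by omega)
  have h2 := half_mem_integralAt hp3
  have h3 := third_mem_integralAt hp3
  set q := fermatQ p
  set Z := powHarmonic 3 n
  set H := powHarmonic 1 (2 * n)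
  set X := powHarmonic 2 (2 * n)
  set h := powHarmonic 1 n
  set x := powHarmonic 2 n
  set B := bernoulli (p - 3)
  set T := ∑ k ∈ range (2 * n), (-1) ^ (k + 1) * powHarmonic 1 k / ((k : ℚ) + 1)
  set D := ∑ k ∈ range (2 * n), (-1) ^ (k + 1) * powHarmonic 2 k / ((k : ℚ) + 1)
  set C := ∑ k ∈ range (2 * n), powHarmonic 2 k / ((k : ℚ) + 1)
  set S := ∑ k ∈ Icc 1 n, harmonic (p + 1 - 2 * k) / k
  clear_value q Z H X h x B T D C S
  have hp1 : (p : ℚ) ∈ powMultiples p 1 := natCast_mem_powMultiples_one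
  have hpi : (p : ℚ) ∈ integralAt p := natCast_mem _ p
  have hh := powMultiples_mono (r := 2) (by norm_num) hh
  have hpC := mul_mem_powMultiples hp1 hC
  have hpD := mul_mem_powMultiples hp1 hD
  have hpZ := mul_mem_powMultiples hp1 hZ
  have c1 : (1 / 2) * (H : ℚ) - 2 + 2 * p ∈ integralAt p := by
    clear hS hT hD hC hH hX hh hh2 hZ hpC hpD hpZ hn; aesop
  have c2 : -(1 / 2) - 2 * (p : ℚ) ∈ integralAt p := by
    clear hS hT hD hC hH hX hh hh2 hZ hpC hpD hpZ hn; aesop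
  have c3 : 2 - 2 * (p : ℚ) ∈ integralAt p := by
    clear hS hT hD hC hH hX hh hh2 hZ hpC hpD hpZ hn; aesop
  have c4 : (1 / 2) * (p : ℚ) ∈ integralAt p := mul_mem h2 hpi
  have c5 : 13 * ((1 / 2) ^ 4 : ℚ) ∈ integralAt p := mul_mem (ofNat_mem _ 13) (pow_mem h2 4)
  have main := add_mem (add_mem (add_mem (add_mem (add_mem (add_mem (add_mem (add_mem hS hT)
    (smul_mem_powMultiples c1 hH)) (smul_mem_powMultiples c2 hX)) (smul_mem_powMultiples c3 hh))
    (smul_mem_powMultiples c4 hh2)) hpC) hpD) (smul_mem_powMultiples c5 hpZ)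
  have hR : -2 * q ^ 2 + 4 * (1 / 3) * (p - 1) * q ^ 3 + 2 * (1 / 3) * Z -
      7 * (1 / 3) * ((1 / 2) * (1 / 2)) * p * Z ∈ integralAt p := by
    clear hS hT hD hC hH hX hh hh2 hZ hpC hpD hpZ main hn
    aesop
  convert add_mem main (pow_mul_mem_powMultiples 2 hR) using 1
  ring

end Main

theorem sum_H_p_add_one_sub_2k_div_k (p : ℕ) (hp : p.Prime) (hp3 : 3 < p) :
    ratCongr p 2
      (∑ k ∈ Finset.Icc 1 ((p - 1) / 2), harmonic (p + 1 - 2 * k) / k)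
      (fermatQ p ^ 2 - 4 * fermatQ p + 4 * p * fermatQ p + 2 * p * fermatQ p ^ 2 -
        p * fermatQ p ^ 3 - (13 / 8) * p * bernoulli (p - 3)) := by
  have := Fact.mk hp
  obtain ⟨n, hn⟩ := hp.odd_of_ne_two (by omega)
  rw [show (p - 1) / 2 = n by omega]
  exact ratCongr_of_sub_mem (sum_harmonic_div_mem hp3 hn)
end
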